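/- arXiv:2410.22227 — 11 statements merged into one kernel-verified Lean document; each statement's English description precedes it below -/
import Mathlib

section
/- Every countable, second-countable, locally compact Hausdorff topological space has a topological basis consisting of sets that are both compact and open. -/
/-!
A locally compact Hausdorff space is completely regular, so two distinct points are separated by a
continuous function to `[0, 1]`. When the space is countable this function misses some value
strictly between `0` and `1`, and cutting there gives a clopen partition; thus the space is totally
separated. A totally disconnected locally compact Hausdorff space has a basis of clopen sets
(`loc_compact_Haus_tot_disc_of_zero_dim`), and the clopen sets small enough to lie inside a compact
neighbourhood are compact.
-/

/-- Every countable, second-countable, locally compact Hausdorff topological space has a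
topological basis consisting of sets that are both compact and open. -/
theorem stmt_1 (X : Type*) [TopologicalSpace X] [Countable X]
    [SecondCountableTopology X] [T2Space X] [WeaklyLocallyCompactSpace X] :
    ∃ B : Set (Set X), TopologicalSpace.IsTopologicalBasis B ∧
      ∀ U ∈ B, IsCompact U ∧ IsOpen U := by
  -- Total disconnectedness is found by instance search, through countability and `T35Space`.
  have hclopen : TopologicalSpace.IsTopologicalBasis {s : Set X | IsClopen s} :=
    loc_compact_Haus_tot_disc_of_zero_dim
  refine ⟨{U | IsCompact U ∧ IsOpen U}, ?_, fun U hU => hU⟩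
  refine TopologicalSpace.isTopologicalBasis_of_isOpen_of_nhds (fun U hU => hU.2) ?_
  intro x U hxU hU
  obtain ⟨K, hK, hKx⟩ := exists_compact_mem_nhds x
  -- A clopen neighbourhood contained in a compact set is itself compact.
  obtain ⟨V, hV, hxV, hVKU⟩ :=
    hclopen.mem_nhds_iff.1 (Filter.inter_mem hKx (hU.mem_nhds hxU))
  exact ⟨V, ⟨hK.of_isClosed_subset hV.isClosed (hVKU.trans Set.inter_subset_left), hV.isOpen⟩,
    hxV, hVKU.trans Set.inter_subset_right⟩
end

section
/- Every countable, second-countable, locally compact Hausdorff topological space admits a partition into pairwise disjoint subsets each of which is compact and open (equivalently, it is homeomorphic to the topological disjoint sum of countably many compact open subspaces). -/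
/-!
The space is regular and second countable, hence metrizable, and a countable metric space is totally
disconnected: for fixed `x`, all but countably many radii `r` give a ball around `x` with empty
sphere, hence clopen. A locally compact, totally disconnected Hausdorff space has a basis of clopen
sets, so every point has a compact open neighbourhood. Enumerating the points as `x₀, x₁, …` and
choosing such neighbourhoods `K₀, K₁, …`, the sets `Kₙ \ (K₀ ∪ ⋯ ∪ Kₙ₋₁)` form the partition: each is
open because compact sets are closed, and compact because it is closed in `Kₙ`.
-/

theorem exists_isCompact_isOpen_mem (X : Type*) [TopologicalSpace X] [Countable X]
    [SecondCountableTopology X] [T2Space X] [WeaklyLocallyCompactSpace X] (x : X) :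
    ∃ K : Set X, x ∈ K ∧ IsCompact K ∧ IsOpen K := by
  have htd : TotallyDisconnectedSpace X := by
    letI := TopologicalSpace.metrizableSpaceMetric X
    exact ⟨Set.Countable.isTotallyDisconnected Set.countable_univ⟩
  obtain ⟨C, hC, hxC⟩ := exists_compact_mem_nhds x
  obtain ⟨V, hV, hxV, hVC⟩ :=
    (loc_compact_Haus_tot_disc_of_zero_dim (H := X)).mem_nhds_iff.1 hxC
  exact ⟨V, hxV, hC.of_isClosed_subset hV.isClosed hVC, hV.isOpen⟩

/-- Every countable, second-countable, locally compact Hausdorff topological space admits a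
partition into pairwise disjoint subsets each of which is compact and open. -/
theorem stmt_2 (X : Type*) [TopologicalSpace X] [Countable X]
    [SecondCountableTopology X] [T2Space X] [WeaklyLocallyCompactSpace X] :
    ∃ P : Set (Set X), (∀ s ∈ P, IsCompact s ∧ IsOpen s) ∧
      P.PairwiseDisjoint id ∧ ⋃₀ P = Set.univ := by
  rcases isEmpty_or_nonempty X with hX | hX
  · exact ⟨∅, by simp, by simp, Subsingleton.elim _ _⟩
  obtain ⟨e, he⟩ := exists_surjective_nat X
  choose K hxK hKc hKo using exists_isCompact_isOpen_mem X
  refine ⟨Set.range (disjointed fun n => K (e n)), ?_, ?_, ?_⟩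
  · rintro _ ⟨n, rfl⟩
    exact disjointedRec (p := fun s : Set X => IsCompact s ∧ IsOpen s)
      (fun _ i h => ⟨h.1.diff (hKo (e i)), h.2.sdiff (hKc (e i)).isClosed⟩)
      ⟨hKc (e n), hKo (e n)⟩
  · rintro _ ⟨m, rfl⟩ _ ⟨n, rfl⟩ hmn
    exact disjoint_disjointed _ fun h => hmn (congrArg _ h)
  · rw [Set.sUnion_range, iUnion_disjointed, Set.eq_univ_iff_forall]
    intro x
    obtain ⟨n, rfl⟩ := he x
    exact Set.mem_iUnion.2 ⟨n, hxK (e n)⟩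
end

section
/- Every countable, second-countable, locally compact Hausdorff topological space is homeomorphic to the order topology of some countable well order (equivalently, to the space of ordinals below some countable ordinal, equipped with the order topology). -/
/-!
The idea is to replace well orders on `X` by injective continuous maps `f : X → Ordinal`: pulling
the order of the ordinals back along `f` gives a well order whose order topology is coarser than
that of `X`, and the two topologies agree as soon as all initial segments `{y | f y ≤ f x}` are
compact (`orderTopology_lift`). So it suffices to build such an `f`.

Call a set tame if it carries an injective continuous map to the ordinals. Tameness passes to
subsets, and a disjoint sequence of tame open sets `K n` has a tame union, since the `n`-th set can
be placed in the block of ordinals `[B * n, B * (n + 1))` for `B` large (`exists_map_iUnion`). If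
the `K n` are moreover compact and `U \ {x} = ⋃ n, K n`, then sending `x` to `B * ω` keeps the map
continuous: the points of `U` mapped above a given `a < B * ω` include all of `U` outside finitely
many of the `K n`, whose union is closed. So `U` is tame too (`tame_of_diff_singleton`).

As `X` is countable, it is zero-dimensional, and each nonempty closed subset has an isolated point
by Baire's theorem. Let `C` be the closed set of points with no tame open neighbourhood. An
isolated point `x` of `C` would have an open neighbourhood `U` with `U \ {x}` disjoint from `C`;
cutting `U \ {x}` into a disjoint sequence of tame compact open sets (`exists_partition`) makes
`U` tame, a contradiction. So `C` is empty. Partitioning `X` itself in the same way and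
concatenating the pieces gives the map `f`; an initial segment is closed in the union of finitely
many pieces, hence compact.
-/

open Set Topology Filter

/-- A set is tame if it admits an injective continuous map to the ordinals. The map is encoded as a
total function, whose values outside `S` are irrelevant. -/
def Tame {X : Type} [TopologicalSpace X] (S : Set X) : Prop :=
  ∃ f : X → Ordinal.{0}, ContinuousOn f S ∧ InjOn f S

lemma Tame.mono {X : Type} [TopologicalSpace X] {S T : Set X} (h : Tame T) (hST : S ⊆ T) :
    Tame S := by
  obtain ⟨f, hc, hi⟩ := h
  exact ⟨f, hc.mono hST, hi.mono hST⟩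

/-- A disjoint sequence of tame open sets can be concatenated: the `n`-th set is mapped into the
`n`-th block of length `B`. -/
lemma exists_map_iUnion {X : Type} [TopologicalSpace X] {K : ℕ → Set X}
    (ho : ∀ n, IsOpen (K n)) (hd : ∀ m n y, y ∈ K m → y ∈ K n → m = n) (ht : ∀ n, Tame (K n)) :
    ∃ (F : X → Ordinal.{0}) (B : Ordinal.{0}), 0 < B ∧ ContinuousOn F (⋃ n, K n) ∧
      InjOn F (⋃ n, K n) ∧ ∀ n, ∀ y ∈ K n, B * n ≤ F y ∧ F y < B * (n + 1 : ℕ) := by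
  classical
  choose f hc hi using ht
  obtain ⟨g, hg⟩ : ∃ g : X → ℕ, ∀ n y, y ∈ K n → g y = n := by
    refine ⟨fun y => if h : ∃ n, y ∈ K n then h.choose else 0, fun n y hy => ?_⟩
    have h : ∃ n, y ∈ K n := ⟨n, hy⟩
    simp only [h, dif_pos]
    exact hd _ _ y h.choose_spec hy
  -- A countable family of ordinals is bounded; the successor makes the bound strict and positive.
  obtain ⟨b, hb⟩ : BddAbove (range fun p : ℕ × X => f p.1 p.2) := Ordinal.bddAbove_of_small
  set B : Ordinal.{0} := Order.succ b with hB
  have hfB : ∀ n y, f n y < B := fun n y => Order.lt_succ_of_le (hb ⟨(n, y), rfl⟩)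
  have hB0 : 0 < B := Order.bot_lt_succ b
  refine ⟨fun y => B * (g y : ℕ) + f (g y) y, B, hB0, ?_, ?_, ?_⟩
  · intro y hy
    obtain ⟨n, hn⟩ := mem_iUnion.1 hy
    have h1 : ContinuousAt (fun z => B * (n : Ordinal) + f n z) y :=
      ((Ordinal.isNormal_add_right (B * n)).continuous.continuousAt).comp
        ((hc n).continuousAt ((ho n).mem_nhds hn))
    refine (h1.congr ?_).continuousWithinAt
    filter_upwards [(ho n).mem_nhds hn] with z hz
    simp only [hg n z hz]
  · intro y hy z hz hyz
    obtain ⟨n, hn⟩ := mem_iUnion.1 hy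
    obtain ⟨m, hm⟩ := mem_iUnion.1 hz
    simp only [hg n y hn, hg m z hm] at hyz
    have hdiv := congrArg (· / B) hyz
    simp only [Ordinal.mul_add_div _ hB0.ne', Ordinal.div_eq_zero_of_lt (hfB _ _),
      add_zero] at hdiv
    have hnm : n = m := by exact_mod_cast hdiv
    subst hnm
    exact hi n hn hm (add_left_cancel hyz)
  · intro n y hy
    simp only [hg n y hy]
    refine ⟨le_self_add, ?_⟩
    push_cast
    rw [mul_add, mul_one]
    exact (add_lt_add_iff_left _).2 (hfB _ _)

/-- If `U \ {x}` is a disjoint union of a sequence of tame compact open sets, then `U` is tame: `x`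
is sent to the supremum of the concatenation of the pieces. -/
lemma tame_of_diff_singleton {X : Type} [TopologicalSpace X] [T2Space X] {U : Set X} {x : X}
    {K : ℕ → Set X} (ho : ∀ n, IsOpen (K n))
    (hk : ∀ n, IsCompact (K n)) (hd : ∀ m n y, y ∈ K m → y ∈ K n → m = n)
    (ht : ∀ n, Tame (K n)) (hUK : U \ {x} = ⋃ n, K n) : Tame U := by
  classical
  obtain ⟨F, B, hB0, hc, hi, hF⟩ := exists_map_iUnion ho hd ht
  have hlt : ∀ y ∈ U, y ≠ x → F y < B * Ordinal.omega0 := by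
    intro y hy hyx
    have : y ∈ ⋃ n, K n := hUK ▸ ⟨hy, hyx⟩
    obtain ⟨n, hn⟩ := mem_iUnion.1 this
    exact (hF n y hn).2.trans (mul_lt_mul_of_pos_left (Ordinal.natCast_lt_omega0 _) hB0)
  refine ⟨Function.update F x (B * Ordinal.omega0), ?_, ?_⟩
  · intro y hy
    by_cases hyx : y = x
    · subst hyx
      unfold ContinuousWithinAt
      rw [Function.update_self]
      refine tendsto_order.2 ⟨fun a ha => ?_, fun a ha => ?_⟩
      · obtain ⟨c, hcω, hac⟩ :=
          (Ordinal.lt_mul_iff_of_isSuccLimit Ordinal.isSuccLimit_omega0).1 ha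
        obtain ⟨n, rfl⟩ := Ordinal.lt_omega0.1 hcω
        have hcl : IsClosed (⋃ m ∈ Finset.range n, K m) :=
          ((Finset.range n).isCompact_biUnion fun m _ => hk m).isClosed
        have hny : y ∉ ⋃ m ∈ Finset.range n, K m := by
          intro h
          obtain ⟨m, -, hm⟩ := mem_iUnion₂.1 h
          have : y ∈ U \ {y} := hUK ▸ mem_iUnion.2 ⟨m, hm⟩
          exact this.2 rfl
        filter_upwards [self_mem_nhdsWithin,
          mem_nhdsWithin_of_mem_nhds (hcl.isOpen_compl.mem_nhds hny)] with z hz hzn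
        by_cases hzy : z = y
        · subst hzy; rwa [Function.update_self]
        · rw [Function.update_of_ne hzy]
          have : z ∈ ⋃ n, K n := hUK ▸ ⟨hz, hzy⟩
          obtain ⟨m, hm⟩ := mem_iUnion.1 this
          have hnm : n ≤ m := by
            by_contra! hlt
            exact hzn (mem_iUnion₂.2 ⟨m, Finset.mem_range.2 hlt, hm⟩)
          exact hac.trans_le ((mul_le_mul_right (by exact_mod_cast hnm) B).trans (hF m z hm).1)
      · filter_upwards [self_mem_nhdsWithin] with z hz
        by_cases hzy : z = y
        · subst hzy; rwa [Function.update_self]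
        · rw [Function.update_of_ne hzy]
          exact (hlt z hz hzy).trans ha
    · have hy' : y ∈ U \ {x} := ⟨hy, hyx⟩
      have hopen : IsOpen (U \ {x}) := hUK ▸ isOpen_iUnion ho
      have h1 : ContinuousAt F y :=
        (hUK ▸ hc : ContinuousOn F (U \ {x})).continuousAt (hopen.mem_nhds hy')
      refine (h1.congr ?_).continuousWithinAt
      filter_upwards [hopen.mem_nhds hy'] with z hz
      rw [Function.update_of_ne hz.2]
  · intro y hy z hz hyz
    by_cases hyx : y = x <;> by_cases hzx : z = x
    · rw [hyx, hzx]
    · subst hyx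
      rw [Function.update_self, Function.update_of_ne hzx] at hyz
      exact absurd hyz (hlt z hz hzx).ne'
    · subst hzx
      rw [Function.update_self, Function.update_of_ne hyx] at hyz
      exact absurd hyz (hlt y hy hyx).ne
    · rw [Function.update_of_ne hyx, Function.update_of_ne hzx] at hyz
      exact hi (hUK ▸ ⟨hy, hyx⟩) (hUK ▸ ⟨hz, hzx⟩) hyz

/-- In a countable Hausdorff space with a basis of compact open sets, as provided by `hz`, an open
set all of whose points have tame open neighbourhoods is a disjoint union of a sequence of tame
compact open sets. -/
lemma exists_partition {X : Type} [TopologicalSpace X] [T2Space X] [Countable X]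
    (hz : ∀ (x : X) (O : Set X), IsOpen O → x ∈ O → ∃ V ⊆ O, x ∈ V ∧ IsOpen V ∧ IsCompact V)
    {W : Set X} (hW : IsOpen W)
    (ht : ∀ x ∈ W, ∃ V, IsOpen V ∧ x ∈ V ∧ Tame V) :
    ∃ K : ℕ → Set X, (∀ n, IsOpen (K n)) ∧ (∀ n, IsCompact (K n)) ∧
      (∀ m n y, y ∈ K m → y ∈ K n → m = n) ∧ (∀ n, Tame (K n)) ∧ W = ⋃ n, K n := by
  have h : ∀ x : X, ∃ V ⊆ W, (x ∈ W → x ∈ V) ∧ IsOpen V ∧ IsCompact V ∧ Tame V := by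
    intro x
    by_cases hx : x ∈ W
    · obtain ⟨T, hTo, hxT, hT⟩ := ht x hx
      obtain ⟨V, hV, hxV, hVo, hVc⟩ := hz x (W ∩ T) (hW.inter hTo) ⟨hx, hxT⟩
      exact ⟨V, hV.trans inter_subset_left, fun _ => hxV, hVo, hVc,
        hT.mono (hV.trans inter_subset_right)⟩
    · exact ⟨∅, empty_subset _, fun h => absurd h hx, isOpen_empty, isCompact_empty,
        fun _ => 0, by simp, by simp⟩
  choose V hVW hxV hVo hVc hVt using h
  rcases isEmpty_or_nonempty X with hX | hX
  · refine ⟨fun _ => ∅, fun _ => isOpen_empty, fun _ => isCompact_empty, by simp,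
      fun _ => ⟨fun _ => 0, by simp, by simp⟩, ?_⟩
    exact Subsingleton.elim _ _
  obtain ⟨e, he⟩ := exists_surjective_nat X
  have hcl : ∀ n, IsClopen (disjointed (fun n => V (e n)) n) := fun n =>
    disjointedRec (f := fun n => V (e n)) (p := IsClopen)
      (fun t i hs => hs.diff ⟨(hVc (e i)).isClosed, hVo (e i)⟩)
      ⟨(hVc (e n)).isClosed, hVo (e n)⟩
  have hsub : ∀ n, disjointed (fun n => V (e n)) n ⊆ V (e n) := fun n => disjointed_subset _ n
  refine ⟨disjointed fun n => V (e n), fun n => (hcl n).isOpen,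
    fun n => (hVc (e n)).of_isClosed_subset (hcl n).isClosed (hsub n), ?_,
    fun n => (hVt (e n)).mono (hsub n), ?_⟩
  · intro m n y hm hn
    by_contra hne
    exact (disjoint_disjointed (fun n => V (e n)) hne).le_bot ⟨hm, hn⟩
  · rw [iUnion_disjointed]
    refine Subset.antisymm (fun y hy => ?_) (iUnion_subset fun n => hVW _)
    obtain ⟨n, rfl⟩ := he y
    exact mem_iUnion.2 ⟨n, hxV _ hy⟩

/-- Countable locally compact Hausdorff spaces have a basis of compact open sets. -/
lemma exists_compact_open {X : Type} [TopologicalSpace X] [Countable X]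
    [SecondCountableTopology X] [T2Space X] [WeaklyLocallyCompactSpace X]
    (x : X) (O : Set X) (hO : IsOpen O) (hx : x ∈ O) :
    ∃ V ⊆ O, x ∈ V ∧ IsOpen V ∧ IsCompact V := by
  have : TotallyDisconnectedSpace X := by
    let := TopologicalSpace.metrizableSpaceMetric X
    exact ⟨(countable_univ (α := X)).isTotallyDisconnected⟩
  obtain ⟨N, hN, hxN⟩ := exists_compact_mem_nhds x
  obtain ⟨V, hV, hxV, hVs⟩ := (loc_compact_Haus_tot_disc_of_zero_dim (H := X)).mem_nhds_iff.1
    (inter_mem (hO.mem_nhds hx) hxN)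
  exact ⟨V, hVs.trans inter_subset_left, hxV, hV.isOpen,
    hN.of_isClosed_subset hV.isClosed (hVs.trans inter_subset_right)⟩

/-- A nonempty closed subset of a countable locally compact Hausdorff space has an isolated
point. -/
lemma exists_isolated {X : Type} [TopologicalSpace X] [Countable X]
    [T2Space X] [WeaklyLocallyCompactSpace X] {C : Set X} (hC : IsClosed C) (hne : C.Nonempty) :
    ∃ x ∈ C, ∃ O, IsOpen O ∧ O ∩ C = {x} := by
  have : Nonempty C := hne.to_subtype
  have : LocallyCompactSpace C := hC.isClosedEmbedding_subtypeVal.locallyCompactSpace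
  obtain ⟨c, y, hy⟩ := nonempty_interior_of_iUnion_of_closed (f := fun c : C => ({c} : Set C))
    (fun _ => isClosed_singleton) (iUnion_of_singleton C)
  have hyc : y = c := mem_singleton_iff.1 (interior_subset hy)
  subst hyc
  have h1 : IsOpen ({y} : Set C) := by
    rw [← subset_interior_iff_isOpen]
    simpa using hy
  obtain ⟨O, hO, hOy⟩ := isOpen_induced_iff.1 h1
  refine ⟨y, y.2, O, hO, ?_⟩
  ext z
  constructor
  · rintro ⟨hz, hzC⟩
    have : (⟨z, hzC⟩ : C) ∈ Subtype.val ⁻¹' O := hz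
    rw [hOy] at this
    exact congrArg Subtype.val this
  · rintro rfl
    have : y ∈ Subtype.val ⁻¹' O := hOy ▸ rfl
    exact ⟨this, y.2⟩

lemma exists_tame_nhd {X : Type} [TopologicalSpace X] [Countable X]
    [SecondCountableTopology X] [T2Space X] [WeaklyLocallyCompactSpace X] (x : X) :
    ∃ V, IsOpen V ∧ x ∈ V ∧ Tame V := by
  set G : Set X := {x | ∃ V, IsOpen V ∧ x ∈ V ∧ Tame V} with hG
  have hGo : IsOpen G := by
    refine isOpen_iff_mem_nhds.2 ?_
    rintro y ⟨V, hV, hy, hT⟩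
    filter_upwards [hV.mem_nhds hy] with z hz using ⟨V, hV, hz, hT⟩
  by_contra hx
  obtain ⟨y, hyG, O, hO, hOy⟩ := exists_isolated hGo.isClosed_compl ⟨x, hx⟩
  have hyO : y ∈ O := (hOy ▸ mem_singleton y : y ∈ O ∩ Gᶜ).1
  have hsub : O \ {y} ⊆ G := by
    rintro z ⟨hz, hzy⟩
    by_contra hzG
    exact hzy (hOy ▸ ⟨hz, hzG⟩ : z ∈ ({y} : Set X))
  obtain ⟨K, ho, hk, hd, ht, hK⟩ := exists_partition exists_compact_open
    (hO.sdiff isClosed_singleton : IsOpen (O \ {y})) fun z hz => hsub hz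
  exact hyG ⟨O, hO, hyO, tame_of_diff_singleton ho hk hd ht hK⟩

/-- The order pulled back along an injective continuous map to the ordinals induces the given
topology, provided its initial segments are compact: for `x` in an open set `U`, the compact set
`{y | f y ≤ f x} \ U` has a largest element `a`, and then `(a, x]` is a neighbourhood of `x` inside
`U` in the order topology. -/
lemma orderTopology_lift {X : Type} [TopologicalSpace X] (f : X → Ordinal.{0})
    (hf : Continuous f) (hi : Function.Injective f) (hk : ∀ x, IsCompact {y | f y ≤ f x}) :
    @OrderTopology X _ (LinearOrder.lift' f hi).toPreorder := by
  let : LinearOrder X := LinearOrder.lift' f hi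
  have hlt : ∀ a b : X, a < b ↔ f a < f b := fun _ _ => Iff.rfl
  have hwf : WellFounded (fun a b : X => a < b) := InvImage.wf f Ordinal.lt_wf
  refine ⟨le_antisymm ?_ ?_⟩
  · refine le_generateFrom ?_
    rintro s ⟨a, rfl | rfl⟩
    · exact isOpen_Ioi.preimage hf
    · exact isOpen_Iio.preimage hf
  · intro U hU
    have hmaxel : ∀ x, (({y | f y ≤ f x}) \ U).Nonempty →
        ∃ a, (f a ≤ f x ∧ a ∉ U) ∧ ∀ y, f y ≤ f x → y ∉ U → f y ≤ f a := by
      intro x hne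
      obtain ⟨a, ha, hmax⟩ := ((hk x).diff hU).exists_isMaxOn hne hf.continuousOn
      exact ⟨a, ha, fun y h1 h2 => hmax ⟨h1, h2⟩⟩
    let t' : TopologicalSpace X := Preorder.topology X
    have : OrderTopology X := ⟨rfl⟩
    change IsOpen[t'] U
    have hIic : ∀ x : X, IsOpen[t'] (Iic x) := by
      intro x
      by_cases hmax : (Ioi x).Nonempty
      · -- The least element above `x` exists by well-foundedness.
        have : Iic x = Iio (hwf.min (Ioi x) hmax) := by
          ext y
          constructor
          · intro hy
            exact mem_Iio.2 (lt_of_le_of_lt (mem_Iic.1 hy)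
              (mem_Ioi.1 (hwf.min_mem (Ioi x) hmax)))
          · intro hy
            by_contra h
            exact hwf.not_lt_min (Ioi x) (mem_Ioi.2 (not_le.1 h)) hy
        rw [this]
        exact isOpen_Iio
      · have : Iic x = univ := by
          ext y
          simp only [mem_Iic, mem_univ, iff_true]
          by_contra h
          exact hmax ⟨y, not_le.1 h⟩
        rw [this]
        exact isOpen_univ
    refine isOpen_iff_mem_nhds.2 fun x hx => ?_
    rcases (({y | f y ≤ f x}) \ U).eq_empty_or_nonempty with he | hne
    · filter_upwards [(hIic x).mem_nhds self_mem_Iic] with y hy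
      by_contra hyU
      exact (he ▸ ⟨hy, hyU⟩ : y ∈ (∅ : Set X))
    · obtain ⟨a, ha, hmax⟩ := hmaxel x hne
      have hax : a < x := lt_of_le_of_ne ha.1 fun h => ha.2 (h ▸ hx)
      filter_upwards [(hIic x).mem_nhds self_mem_Iic, isOpen_Ioi.mem_nhds hax] with y hy hya
      by_contra hyU
      exact absurd (hmax y hy hyU) (not_le.2 ((hlt _ _).1 hya))

/-- Every countable, second-countable, locally compact Hausdorff topological space is
homeomorphic to the order topology of some countable well order. -/
theorem stmt_3 (X : Type) [TopologicalSpace X] [Countable X]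
    [SecondCountableTopology X] [T2Space X] [WeaklyLocallyCompactSpace X] :
    ∃ (W : Type) (lo : LinearOrder W) (ts : TopologicalSpace W),
      Countable W ∧
      @OrderTopology W ts lo.toPreorder ∧
      WellFounded (fun a b : W => lo.lt a b) ∧
      Nonempty (@Homeomorph X W _ ts) := by
  obtain ⟨K, ho, hk, hd, ht, hK⟩ := exists_partition (X := X) exists_compact_open isOpen_univ
    fun z _ => exists_tame_nhd z
  obtain ⟨F, B, hB0, hc, hi, hF⟩ := exists_map_iUnion ho hd ht
  rw [← hK] at hc hi
  have hc' : Continuous F := continuousOn_univ.1 hc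
  have hi' : Function.Injective F := injOn_univ.1 hi
  refine ⟨X, LinearOrder.lift' F hi', inferInstance, inferInstance,
    orderTopology_lift F hc' hi' fun x => ?_, InvImage.wf F Ordinal.lt_wf, ⟨Homeomorph.refl X⟩⟩
  have hmem : ∀ y, ∃ n, y ∈ K n := fun y => mem_iUnion.1 (hK ▸ mem_univ y)
  obtain ⟨n, hn⟩ := hmem x
  refine ((Finset.range (n + 1)).isCompact_biUnion fun m _ => hk m).of_isClosed_subset
    (isClosed_Iic.preimage hc') fun y hy => ?_
  obtain ⟨m, hm⟩ := hmem y
  refine mem_iUnion₂.2 ⟨m, Finset.mem_range.2 ?_, hm⟩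
  by_contra! hnm
  have h1 : B * ((n + 1 : ℕ) : Ordinal) ≤ B * (m : Ordinal) :=
    mul_le_mul_right (by exact_mod_cast hnm) B
  exact absurd (hy : F y ≤ F x) (not_le.2 ((hF n x hn).2.trans_le (h1.trans (hF m y hm).1)))
end

section
/- If X is a countable, second-countable topological space such that every countable, second-countable, compact Hausdorff space admits a topological embedding into X, then X is not scattered. -/
/-!
The argument is a Cantor–Bendixson rank comparison. Say that a point `x` has rank at least `α` if
for each `β < α` every neighbourhood of `x` contains another point of rank at least `β`
(`RankGE`). Continuous injections do not decrease this rank (`RankGE.map`).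

For each `α < ω₁` there is a countable, second-countable compact Hausdorff space with a point of
rank at least `α` (`exists_compact_rankGE`): take the one-point compactification of the disjoint
sum of infinitely many copies of a space for each `β < α`. Hence `X` has points of rank at least
`α` for every `α < ω₁`. As `X` is countable and `ω₁` is not a countable supremum of smaller
ordinals, a single point must then have rank at least every `α < ω₁` (`exists_uniform_rankGE`).
The same pigeonhole inside a neighbourhood of such a point, punctured at the point, shows that the
set of these points has no isolated point.
-/

/-- A topological space is scattered if every nonempty subset has a point that is
isolated in the subspace topology. -/
def Scattered (X : Type*) [TopologicalSpace X] : Prop :=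
  ∀ S : Set X, S.Nonempty → ∃ x ∈ S, ∃ U : Set X, IsOpen U ∧ U ∩ S = {x}

open Set Filter Topology Ordinal Cardinal

/-- `RankGE α x`: the point `x` has Cantor–Bendixson rank at least `α`, that is, it lies in the
`α`-th iterated derived set of the whole space. -/
def RankGE {X : Type} [TopologicalSpace X] (α : Ordinal.{0}) (x : X) : Prop :=
  ∀ β, β < α → ∀ U : Set X, IsOpen U → x ∈ U → ∃ y ∈ U, y ≠ x ∧ RankGE β y
termination_by α

theorem RankGE.mono {X : Type} [TopologicalSpace X] {α β : Ordinal.{0}} (hab : α ≤ β) {x : X}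
    (hx : RankGE β x) : RankGE α x := by
  rw [RankGE] at hx ⊢
  exact fun γ hγ => hx γ (hγ.trans_le hab)

theorem RankGE.map {C X : Type} [TopologicalSpace C] [TopologicalSpace X] {f : C → X}
    (hf : Continuous f) (hinj : Function.Injective f) {α : Ordinal.{0}} {c : C}
    (hc : RankGE α c) : RankGE α (f c) := by
  induction α using WellFoundedLT.induction generalizing c with
  | ind α ih =>
    rw [RankGE] at hc ⊢
    intro β hβ U hU hcU
    obtain ⟨y, hyU, hyc, hy⟩ := hc β hβ (f ⁻¹' U) (hU.preimage hf) hcU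
    exact ⟨f y, hyU, hinj.ne hyc, ih β hβ hy⟩

/-- Pigeonhole: if every `y ∈ A` failed to have rank at least some `a y < ω₁`, then the supremum of
the countably many `a y` would be a countable ordinal that no rank in `A` reaches. -/
theorem exists_uniform_rankGE {X : Type} [TopologicalSpace X] [Countable X] (A : Set X)
    (hA : ∀ α < ω₁, ∃ y ∈ A, RankGE α y) : ∃ y ∈ A, ∀ α < ω₁, RankGE α y := by
  by_contra! hcon
  have hcon' : ∀ y : A, ∃ α < ω₁, ¬ RankGE α (y : X) := fun y => hcon y y.2
  choose a ha hna using hcon'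
  obtain ⟨y, hyA, hy⟩ := hA (⨆ y, a y) (Ordinal.iSup_lt_omega_one ha)
  exact hna ⟨y, hyA⟩ (hy.mono (Ordinal.le_iSup a ⟨y, hyA⟩))

theorem countable_Iio_of_lt_omega_one {α : Ordinal.{0}} (hα : α < ω₁) :
    Countable (Iio α) := by
  rw [← Cardinal.mk_le_aleph0_iff, Cardinal.mk_Iio_ordinal, Cardinal.lift_le_aleph0,
    ← Order.lt_succ_iff, Cardinal.succ_aleph0]
  rwa [← Cardinal.ord_aleph, Cardinal.lt_ord] at hα

/-- In a disjoint sum of compact spaces, the complements of finite subsums form a basis of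
neighbourhoods of infinity. -/
theorem coclosedCompact_sigma {ι : Type} (C : ι → Type) [∀ i, TopologicalSpace (C i)]
    [∀ i, CompactSpace (C i)] [∀ i, T2Space (C i)] :
    coclosedCompact (Σ i, C i) = comap Sigma.fst cofinite := by
  rw [coclosedCompact_eq_cocompact]
  apply le_antisymm
  · rw [← tendsto_iff_comap]
    intro s hs
    rw [mem_cofinite] at hs
    rw [mem_map, mem_cocompact]
    refine ⟨⋃ i ∈ sᶜ, range (Sigma.mk i), ?_, ?_⟩
    · exact hs.isCompact_biUnion fun i _ => isCompact_range continuous_sigmaMk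
    · rintro ⟨i, c⟩ h
      by_contra hi
      exact h (mem_biUnion (show i ∈ sᶜ from hi) (mem_range_self c))
  · intro s hs
    rw [mem_cocompact] at hs
    obtain ⟨K, hK, hKs⟩ := hs
    let _ : TopologicalSpace ι := ⊥
    have : DiscreteTopology ι := ⟨rfl⟩
    have hcont : Continuous (Sigma.fst : (Σ i, C i) → ι) :=
      continuous_sigma fun i => continuous_const
    refine ⟨(Sigma.fst '' K)ᶜ, ?_, ?_⟩
    · rw [mem_cofinite, compl_compl]
      exact (hK.image hcont).finite_of_discrete
    · exact fun p hp => hKs fun hpK => hp (mem_image_of_mem _ hpK)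

/-- As the space is countable, first countability suffices; at infinity it holds because a countable
index set has only countably many finite subsets. -/
theorem secondCountable_onePoint_sigma {ι : Type} [Countable ι] (C : ι → Type)
    [∀ i, TopologicalSpace (C i)] [∀ i, CompactSpace (C i)] [∀ i, T2Space (C i)]
    [∀ i, Countable (C i)] [∀ i, SecondCountableTopology (C i)] :
    SecondCountableTopology (OnePoint (Σ i, C i)) := by
  have : Countable (OnePoint (Σ i, C i)) := inferInstanceAs (Countable (Option _))
  have : FirstCountableTopology (OnePoint (Σ i, C i)) := by
    refine ⟨fun x => ?_⟩
    induction x using OnePoint.rec with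
    | infty =>
      rw [OnePoint.nhds_infty_eq, coclosedCompact_sigma]
      have : (cofinite : Filter ι).IsCountablyGenerated :=
        HasCountableBasis.isCountablyGenerated ⟨hasBasis_cofinite, Set.Countable.ofPred_finite⟩
      infer_instance
    | coe x =>
      rw [OnePoint.nhds_coe_eq]
      infer_instance
  infer_instance

/-- The witness is the point at infinity of the one-point compactification of the sum of `ℵ₀` copies
of a witness for each `β < α`. -/
theorem exists_compact_rankGE (α : Ordinal.{0}) (hα : α < ω₁) :
    ∃ (C : Type) (_ : TopologicalSpace C) (_ : Countable C) (_ : SecondCountableTopology C)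
      (_ : CompactSpace C) (_ : T2Space C) (c : C), RankGE α c := by
  induction α using WellFoundedLT.induction with
  | ind α ih =>
    have ih' : ∀ β : Iio α, _ := fun β => ih β.1 β.2 (lt_trans β.2 hα)
    choose C tC cC sC kC hC c hc using ih'
    have := countable_Iio_of_lt_omega_one hα
    -- `Iio α` lives in `Type 1`, so it is shrunk to serve as an index in `Type`; the factor `ℕ`
    -- provides infinitely many copies of each `C β`.
    let e := equivShrink.{0} (Iio α)
    have : Countable (Shrink.{0} (Iio α)) := e.symm.injective.countable
    let D : Shrink.{0} (Iio α) × ℕ → Type := fun i => C (e.symm i.1)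
    let _ : ∀ i, TopologicalSpace (D i) := fun i => tC _
    have : ∀ i, Countable (D i) := fun i => cC _
    have : ∀ i, SecondCountableTopology (D i) := fun i => sC _
    have : ∀ i, CompactSpace (D i) := fun i => kC _
    have : ∀ i, T2Space (D i) := fun i => hC _
    have : WeaklyLocallyCompactSpace (Σ i, D i) := ⟨fun p =>
      ⟨range (Sigma.mk p.1), isCompact_range continuous_sigmaMk,
        isOpen_range_sigmaMk.mem_nhds (mem_range_self p.2)⟩⟩
    refine ⟨OnePoint (Σ i, D i), inferInstance, inferInstanceAs (Countable (Option _)),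
      secondCountable_onePoint_sigma D, inferInstance, inferInstance, OnePoint.infty, ?_⟩
    rw [RankGE]
    intro β hβ U hU hmem
    have hU' : ((↑) : (Σ i, D i) → OnePoint _) ⁻¹' U ∈ coclosedCompact (Σ i, D i) := by
      rw [← OnePoint.comap_coe_nhds_infty]
      exact preimage_mem_comap (hU.mem_nhds hmem)
    rw [coclosedCompact_sigma] at hU'
    obtain ⟨s, hs, hsU⟩ := hU'
    -- Only finitely many summands are missed by `U`, hence some copy of `C β` lies inside `U`.
    obtain ⟨n, hn⟩ : ∃ n : ℕ, (e ⟨β, hβ⟩, n) ∈ s := by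
      have hfin := (mem_cofinite.1 hs).preimage
        (f := fun n : ℕ => (e ⟨β, hβ⟩, n)) (fun a _ b _ h => (Prod.ext_iff.1 h).2)
      obtain ⟨n, hn⟩ := hfin.exists_notMem
      exact ⟨n, not_not.1 hn⟩
    let p : D (e ⟨β, hβ⟩, n) := c (e.symm (e ⟨β, hβ⟩))
    have hp : RankGE β p := by
      have := hc (e.symm (e ⟨β, hβ⟩))
      exact this.mono (by simp)
    refine ⟨((⟨_, p⟩ : Σ i, D i) : OnePoint _), hsU hn, OnePoint.coe_ne_infty _, ?_⟩
    exact hp.map (f := fun q => ((⟨(e ⟨β, hβ⟩, n), q⟩ : Σ i, D i) : OnePoint (Σ i, D i)))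
      (OnePoint.continuous_coe.comp continuous_sigmaMk)
      (OnePoint.coe_injective.comp sigma_mk_injective)

/-- If `X` is a countable, second-countable topological space such that every countable,
second-countable, compact Hausdorff space admits a topological embedding into `X`,
then `X` is not scattered. -/
theorem stmt_5 (X : Type) [TopologicalSpace X] [Countable X] [SecondCountableTopology X]
    (h : ∀ (C : Type) [TopologicalSpace C] [Countable C] [SecondCountableTopology C]
      [CompactSpace C] [T2Space C], ∃ f : C → X, Topology.IsEmbedding f) :
    ¬ Scattered X := by
  intro hX
  obtain ⟨x₀, -, hx₀⟩ := exists_uniform_rankGE (univ : Set X) fun α hα => by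
    obtain ⟨C, _, _, _, _, _, c, hc⟩ := exists_compact_rankGE α hα
    obtain ⟨f, hf⟩ := h C
    exact ⟨f c, mem_univ _, hc.map hf.continuous hf.injective⟩
  obtain ⟨x, hx, U, hU, hUS⟩ := hX {x | ∀ α < ω₁, RankGE α x} ⟨x₀, hx₀⟩
  have hxU : x ∈ U := (hUS.symm.subset rfl).1
  obtain ⟨y, ⟨hyU, hyx⟩, hy⟩ := exists_uniform_rankGE (U \ {x}) fun α hα => by
    have hsucc := hx (Order.succ α) ((isSuccLimit_omega 1).succ_lt hα)
    rw [RankGE] at hsucc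
    obtain ⟨y, hyU, hyx, hy⟩ := hsucc α (Order.lt_succ α) U hU hxU
    exact ⟨y, ⟨hyU, hyx⟩, hy⟩
  exact hyx (hUS.subset ⟨hyU, hy⟩)
end

section
/- Every countable, second-countable, regular Hausdorff, scattered topological space is homeomorphic to a subspace (with the subspace topology) of the order topology of some countable well order. -/
open Set Filter Topology Ordinal

/-- `f` describes the topology of `X` near the points of `U`, relative to `U`, as the pullback
of the order topology on the ordinals, and `f` is bounded on `U` by a countable ordinal. Values
of `f` off `U` are irrelevant. As `X` is T₀, such an `f` restricts to a topological
embedding of `U`. -/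
def OrdEmbeds {X : Type} [TopologicalSpace X] (U : Set X) : Prop :=
  ∃ f : X → Ordinal.{0}, ∃ o < ω₁,
    ∀ x ∈ U, f x < o ∧ 𝓝[U] x = comap f (𝓝 (f x)) ⊓ 𝓟 U

lemma OrdEmbeds.mono {X : Type} [TopologicalSpace X] {U V : Set X} (h : OrdEmbeds V)
    (hUV : U ⊆ V) : OrdEmbeds U := by
  obtain ⟨f, o, ho, hf⟩ := h
  refine ⟨f, o, ho, fun x hx => ⟨(hf x (hUV hx)).1, ?_⟩⟩
  have := (hf x (hUV hx)).2
  calc 𝓝[U] x = 𝓝[V] x ⊓ 𝓟 U := by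
        rw [nhdsWithin, nhdsWithin, inf_assoc, inf_principal, inter_eq_right.2 hUV]
    _ = _ := by rw [this, inf_assoc, inf_principal, inter_eq_right.2 hUV]

lemma comap_inf_principal_congr {X Y : Type*} {f g : X → Y} {V : Set X} (h : EqOn f g V)
    (F : Filter Y) : comap f F ⊓ 𝓟 V = comap g F ⊓ 𝓟 V := by
  have key : ∀ {f g : X → Y}, EqOn f g V → comap f F ⊓ 𝓟 V ≤ comap g F ⊓ 𝓟 V := by
    intro f g h
    refine le_inf ?_ inf_le_right
    rintro t ⟨u, hu, ht⟩
    refine mem_inf_principal.2 (mem_of_superset (preimage_mem_comap hu) fun x hx hxV => ht ?_)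
    simpa [h hxV] using hx
  exact le_antisymm (key h) (key h.symm)

/-- Left translations of the ordinals embed them topologically, being normal. -/
lemma isEmbedding_ordinal_add (a : Ordinal.{0}) : IsEmbedding (fun b => a + b) := by
  refine (isNormal_add_right a).strictMono.isEmbedding_of_ordConnected ?_
  have : range (fun b => a + b) = Ici a := by
    ext c
    exact ⟨by rintro ⟨b, rfl⟩; exact le_self_add (a := a), fun h => ⟨c - a, Ordinal.add_sub_cancel_of_le h⟩⟩
  rw [this]
  exact ordConnected_Ici

lemma add_lt_omega_one {a b : Ordinal.{0}} (ha : a < ω₁) (hb : b < ω₁) : a + b < ω₁ :=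
  isPrincipal_add_omega 1 ha hb

/-- Countably many pairwise disjoint open pieces can be placed in consecutive open blocks
`(s n, s (n + 1))` of countable ordinals. -/
lemma exists_blocks {X : Type} [TopologicalSpace X] {V : ℕ → Set X}
    (hV : ∀ n, IsOpen (V n)) (hd : Pairwise fun i j => Disjoint (V i) (V j))
    (hg : ∀ n, OrdEmbeds (V n)) :
    ∃ (g : X → Ordinal.{0}) (s : ℕ → Ordinal.{0}), StrictMono s ∧ (∀ n, s n < ω₁) ∧
      ∀ n, ∀ x ∈ V n, g x ∈ Ioo (s n) (s (n + 1)) ∧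
        𝓝 x = comap g (𝓝 (g x)) ⊓ 𝓟 (V n) := by
  classical
  choose f o ho hf using hg
  let s : ℕ → Ordinal.{0} := fun n => Nat.rec 0 (fun n a => a + 1 + o n) n
  have hs : ∀ n, s (n + 1) = s n + 1 + o n := fun n => rfl
  have hlt : ∀ a : Ordinal.{0}, a < a + 1 := fun a => lt_add_one a
  have h1 : (1 : Ordinal.{0}) < ω₁ := one_lt_omega0.trans omega0_lt_omega_one
  let g : X → Ordinal.{0} := fun x =>
    if h : ∃ n, x ∈ V n then s h.choose + 1 + f h.choose x else 0
  have hgV : ∀ n, ∀ x ∈ V n, g x = s n + 1 + f n x := by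
    intro n x hx
    have h : ∃ n, x ∈ V n := ⟨n, hx⟩
    have hn : h.choose = n := by
      by_contra hne
      exact disjoint_left.1 (hd hne) h.choose_spec hx
    simp only [g, dif_pos h, hn]
  refine ⟨g, s, strictMono_nat_of_lt_succ fun n => ?_, fun n => ?_, fun n x hx => ⟨⟨?_, ?_⟩, ?_⟩⟩
  · rw [hs]; exact (hlt _).trans_le le_self_add
  · induction n with
    | zero => exact zero_lt_one.trans h1
    | succ n ih => rw [hs]; exact add_lt_omega_one (add_lt_omega_one ih h1) (ho n)
  · rw [hgV n x hx]; exact (hlt _).trans_le le_self_add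
  · rw [hgV n x hx, hs]; exact (isNormal_add_right _).strictMono (hf n x hx).1
  · rw [← (hV n).nhdsWithin_eq hx, (hf n x hx).2,
      comap_inf_principal_congr (f := g) (g := (fun b => s n + 1 + b) ∘ f n)
        (fun y hy => hgV n y hy), hgV n x hx, ← comap_comap,
      ← (isEmbedding_ordinal_add (s n + 1)).nhds_eq_comap]

/-- In the situation of `exists_blocks`, the ambient set may be enlarged from a piece to
any `U` whose points outside the piece avoid the block. -/
lemma nhdsWithin_eq_of_block {X : Type} [TopologicalSpace X] {U V : Set X} {g : X → Ordinal.{0}}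
    {a b : Ordinal.{0}} {x : X} (hV : IsOpen V) (hx : x ∈ V) (hVU : V ⊆ U)
    (hxg : g x ∈ Ioo a b) (h : 𝓝 x = comap g (𝓝 (g x)) ⊓ 𝓟 V)
    (hU : ∀ y ∈ U, g y ∈ Ioo a b → y ∈ V) :
    𝓝[U] x = comap g (𝓝 (g x)) ⊓ 𝓟 U := by
  have hUx : U ∈ 𝓝 x := mem_of_superset (hV.mem_nhds hx) hVU
  rw [nhdsWithin_eq_nhds.2 hUx]
  refine le_antisymm (le_inf (h.le.trans inf_le_left) (le_principal_iff.2 hUx)) ?_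
  rw [h]
  refine le_inf inf_le_left (le_principal_iff.2 (mem_inf_principal.2 ?_))
  exact mem_of_superset (preimage_mem_comap (isOpen_Ioo.mem_nhds hxg)) fun y hy hyU => hU y hyU hy

lemma eq_of_mem_blocks {s : ℕ → Ordinal.{0}} (hs : StrictMono s) {m n : ℕ} {a : Ordinal.{0}}
    (hm : a ∈ Ioo (s m) (s (m + 1))) (hn : a ∈ Ioo (s n) (s (n + 1))) : m = n := by
  have h1 := hs.lt_iff_lt.1 (hm.1.trans hn.2)
  have h2 := hs.lt_iff_lt.1 (hn.1.trans hm.2)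
  omega

lemma OrdEmbeds.iUnion {X : Type} [TopologicalSpace X] {V : ℕ → Set X}
    (hV : ∀ n, IsOpen (V n)) (hd : Pairwise fun i j => Disjoint (V i) (V j))
    (hg : ∀ n, OrdEmbeds (V n)) : OrdEmbeds (⋃ n, V n) := by
  obtain ⟨g, s, hs, hs1, h⟩ := exists_blocks hV hd hg
  refine ⟨g, ⨆ n, s n, Ordinal.iSup_lt_omega_one hs1, fun x hx => ?_⟩
  obtain ⟨n, hn⟩ := mem_iUnion.1 hx
  refine ⟨(h n x hn).1.2.trans_le (Ordinal.le_iSup s _), ?_⟩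
  refine nhdsWithin_eq_of_block (hV n) hn (subset_iUnion V n) (h n x hn).1 (h n x hn).2 ?_
  intro y hy hyg
  obtain ⟨m, hm⟩ := mem_iUnion.1 hy
  exact eq_of_mem_blocks hs (h m y hm).1 hyg ▸ hm

/-- A set covered by clopen embeddable sets is embeddable: disjointify a countable subcover. -/
lemma OrdEmbeds.of_clopen_cover {X : Type} [TopologicalSpace X] [Countable X] {U : Set X}
    (h : ∀ x ∈ U, ∃ C, IsClopen C ∧ x ∈ C ∧ OrdEmbeds C) : OrdEmbeds U := by
  rcases U.eq_empty_or_nonempty with rfl | hU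
  · exact ⟨fun _ => 0, 0, omega_pos 1, by simp⟩
  obtain ⟨e, rfl⟩ := U.to_countable.exists_eq_range hU
  choose C hC hmem hgood using fun n => h (e n) (mem_range_self n)
  have hopen : ∀ n, IsOpen (disjointed C n) := by
    intro n
    refine disjointedRec (p := fun A => IsOpen A) (fun {t} i ht => ht.sdiff (hC i).1) (hC n).2
  refine (OrdEmbeds.iUnion hopen (disjoint_disjointed C)
    fun n => (hgood n).mono (disjointed_subset C n)).mono ?_
  rw [iUnion_disjointed]
  rintro _ ⟨n, rfl⟩
  exact mem_iUnion.2 ⟨n, hmem n⟩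

/-- Countable regular second-countable spaces are zero-dimensional: for a compatible metric
only countably many radii are distances from `x`, and balls of any other radius are clopen. -/
lemma nhds_hasBasis_clopen {X : Type} [TopologicalSpace X] [Countable X]
    [SecondCountableTopology X] [T3Space X] (x : X) :
    (𝓝 x).HasBasis (fun C : Set X => x ∈ C ∧ IsClopen C) id := by
  let _ := TopologicalSpace.metrizableSpaceMetric X
  refine ⟨fun t => ⟨fun ht => ?_, fun ⟨C, hC, hCt⟩ =>
    mem_of_superset (hC.2.isOpen.mem_nhds hC.1) hCt⟩⟩
  obtain ⟨ε, hε, hεt⟩ := Metric.mem_nhds_iff.1 ht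
  obtain ⟨r, hr, hrn⟩ : ∃ r ∈ Ioo 0 ε, r ∉ range (fun y => dist y x) := by
    by_contra! hcon
    exact (Cardinal.Real.Ioo_countable_iff.not.2 (not_le.2 hε)) ((countable_range _).mono hcon)
  refine ⟨Metric.ball x r, ⟨Metric.mem_ball_self hr.1, ?_, Metric.isOpen_ball⟩,
    (Metric.ball_subset_ball hr.2.le).trans hεt⟩
  have : Metric.ball x r = Metric.closedBall x r := by
    ext y
    exact ⟨fun h => Metric.ball_subset_closedBall h, fun h => lt_of_le_of_ne h fun h' => hrn ⟨y, h'⟩⟩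
  rw [this]
  exact Metric.isClosed_closedBall

/-- The inductive step: if all points of `U` other than `x` have embeddable clopen
neighbourhoods, then so has `x`. Along a decreasing clopen base `B n` at `x`, the differences
`B n \ B (n + 1)` are laid out in successive blocks, and `x` is sent to their supremum. -/
lemma OrdEmbeds.exists_clopen_of_punctured {X : Type} [TopologicalSpace X] [Countable X]
    [SecondCountableTopology X] [T3Space X] {x : X} {U : Set X} (hU : U ∈ 𝓝 x)
    (h : ∀ y ∈ U, y ≠ x → ∃ C, IsClopen C ∧ y ∈ C ∧ OrdEmbeds C) :
    ∃ C, IsClopen C ∧ x ∈ C ∧ OrdEmbeds C := by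
  classical
  have hb : (𝓝 x).HasBasis (fun C : Set X => (x ∈ C ∧ IsClopen C) ∧ C ⊆ U) id :=
    (nhds_hasBasis_clopen x).restrict_subset hU
  obtain ⟨B, hB, hBb⟩ := hb.exists_antitone_subbasis
  simp only [id] at hBb
  have hanti : Antitone B := hBb.antitone
  let V : ℕ → Set X := fun n => B n \ B (n + 1)
  have hVo : ∀ n, IsOpen (V n) := fun n => (hB n).1.2.isOpen.sdiff (hB (n + 1)).1.2.isClosed
  have hVd : Pairwise fun i j => Disjoint (V i) (V j) := by
    refine (pairwise_disjoint_on V).2 fun i j hij => disjoint_left.2 fun y hi hj => ?_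
    exact hi.2 (hanti (Nat.succ_le_of_lt hij) hj.1)
  have hVg : ∀ n, OrdEmbeds (V n) := fun n => .of_clopen_cover fun y hy =>
    h y ((hB n).2 hy.1) fun hyx => hy.2 (hyx ▸ (hB (n + 1)).1.1)
  obtain ⟨g, s, hs, hs1, hg⟩ := exists_blocks hVo hVd hVg
  have hxV : ∀ n, x ∉ V n := fun n hx => hx.2 (hB (n + 1)).1.1
  -- Every point other than `x` drops out of the base at some first stage.
  have hcov : ∀ n, ∀ y ∈ B n, y ≠ x → ∃ m, n ≤ m ∧ y ∈ V m := by
    intro n y hy hyx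
    obtain ⟨k, -, hk⟩ := hBb.toHasBasis.mem_iff.1 (isOpen_ne.mem_nhds hyx.symm)
    have hex : ∃ k, y ∉ B k := ⟨k, fun hyk => hk hyk rfl⟩
    have hlt : n < Nat.find hex := by
      by_contra! hle
      exact Nat.find_spec hex (hanti hle hy)
    refine ⟨Nat.find hex - 1, by omega, ?_, ?_⟩
    · exact not_not.1 (Nat.find_min hex (m := Nat.find hex - 1) (by omega))
    · rw [Nat.sub_add_cancel (by omega)]; exact Nat.find_spec hex
  set l : Ordinal.{0} := ⨆ n, s n with hl
  have hsl : ∀ n, s n < l := fun n => (hs n.lt_succ_self).trans_le (Ordinal.le_iSup s _)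
  let f : X → Ordinal.{0} := Function.update g x l
  have hfx : f x = l := Function.update_self ..
  have hfV : ∀ n, EqOn f g (V n) := fun n y hy =>
    Function.update_of_ne (fun hyx : y = x => hxV n (hyx ▸ hy)) _ _
  refine ⟨B 0, (hB 0).1.2, (hB 0).1.1, f, l + 1,
    add_lt_omega_one (Ordinal.iSup_lt_omega_one hs1) (one_lt_omega0.trans omega0_lt_omega_one),
    fun y hy => ?_⟩
  by_cases hyx : y = x
  · subst hyx
    refine ⟨by rw [hfx]; exact lt_add_one l, ?_⟩
    rw [nhdsWithin_eq_nhds.2 ((hB 0).1.2.isOpen.mem_nhds hy), hfx]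
    apply le_antisymm
    · refine le_inf (tendsto_iff_comap.1 ?_)
        (le_principal_iff.2 ((hB 0).1.2.isOpen.mem_nhds hy))
      refine tendsto_order.2 ⟨fun a ha => ?_, fun a ha => ?_⟩
      · obtain ⟨n, hn⟩ := Ordinal.lt_iSup_iff.1 ha
        filter_upwards [hBb.toHasBasis.mem_of_mem (i := n) trivial] with z hz
        by_cases hzy : z = y
        · rw [hzy, hfx]; exact ha
        · obtain ⟨m, hnm, hm⟩ := hcov n z hz hzy
          rw [hfV m hm]
          exact hn.trans_le ((hs.monotone hnm).trans (hg m z hm).1.1.le)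
      · filter_upwards [(hB 0).1.2.isOpen.mem_nhds hy] with z hz
        by_cases hzy : z = y
        · rw [hzy, hfx]; exact ha
        · obtain ⟨m, hnm, hm⟩ := hcov 0 z hz hzy
          rw [hfV m hm]
          exact ((hg m z hm).1.2.trans (hsl _)).trans ha
    · refine hBb.toHasBasis.ge_iff.2 fun n _ => mem_inf_principal.2 ?_
      refine mem_of_superset (preimage_mem_comap (isOpen_Ioi.mem_nhds (hsl n))) fun z hz hz0 => ?_
      by_cases hzy : z = y
      · rw [hzy]; exact (hB n).1.1
      · obtain ⟨m, -, hm⟩ := hcov 0 z hz0 hzy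
        have hz' : s n < f z := hz
        rw [hfV m hm] at hz'
        have := hs.lt_iff_lt.1 (hz'.trans (hg m z hm).1.2)
        exact hanti (by omega : n ≤ m) hm.1
  · obtain ⟨n, -, hn⟩ := hcov 0 y hy hyx
    have hyn := hg n y hn
    rw [← hfV n hn] at hyn
    refine ⟨(hyn.1.2.trans (hsl _)).trans (lt_add_one l), ?_⟩
    refine nhdsWithin_eq_of_block (hVo n) hn (fun z hz => hanti (Nat.zero_le n) hz.1) hyn.1
      (hyn.2.trans (comap_inf_principal_congr (hfV n).symm _)) fun z hz hzg => ?_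
    by_cases hzx : z = x
    · rw [hzx, hfx] at hzg
      exact absurd hzg.2 (hsl _).not_gt
    · obtain ⟨m, -, hm⟩ := hcov 0 z hz hzx
      rw [hfV m hm] at hzg
      exact eq_of_mem_blocks hs (hg m z hm).1 hzg ▸ hm

lemma Scattered.ordEmbeds_univ {X : Type} [TopologicalSpace X] [Countable X]
    [SecondCountableTopology X] [T3Space X] (hX : Scattered X) :
    OrdEmbeds (univ : Set X) := by
  refine .of_clopen_cover fun x _ => ?_
  by_contra hx
  -- An isolated point of the set of bad points has only good points around it.
  obtain ⟨y, hy, U, hU, hUy⟩ :=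
    hX {x | ¬ ∃ C, IsClopen C ∧ x ∈ C ∧ OrdEmbeds C} ⟨x, hx⟩
  have hyU : y ∈ U := (hUy.ge (mem_singleton y)).1
  refine hy (OrdEmbeds.exists_clopen_of_punctured (hU.mem_nhds hyU) fun z hz hzy => ?_)
  by_contra hbad
  exact hzy (hUy.le ⟨hz, hbad⟩)

/-- Every countable, second-countable, regular Hausdorff, scattered topological space is
homeomorphic to a subspace (with the subspace topology) of the order topology of some
countable well order. -/
theorem stmt_6 (X : Type) [TopologicalSpace X] [Countable X]
    [SecondCountableTopology X] [T3Space X] (hX : Scattered X) :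
    ∃ (W : Type) (lo : LinearOrder W) (ts : TopologicalSpace W),
      Countable W ∧
      @OrderTopology W ts lo.toPreorder ∧
      WellFounded (fun a b : W => lo.lt a b) ∧
      ∃ S : Set W, Nonempty (@Homeomorph X S _ (ts.induced (Subtype.val : S → W))) := by
  obtain ⟨f, o, ho, hf⟩ := hX.ordEmbeds_univ
  let ts : TopologicalSpace o.ToType := Preorder.topology o.ToType
  have : OrderTopology o.ToType := ⟨rfl⟩
  let j : o.ToType → Ordinal.{0} := fun w => (ToType.mk.symm w).1
  have hj : IsEmbedding j := by
    have hm : StrictMono j := fun a b hab => ToType.mk.symm.strictMono hab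
    refine hm.isEmbedding_of_ordConnected ?_
    have : range j = Iio o := by
      ext c
      exact ⟨by rintro ⟨w, rfl⟩; exact (ToType.mk.symm w).2,
        fun hc => ⟨ToType.mk ⟨c, hc⟩, by simp [j]⟩⟩
    rw [this]
    exact ordConnected_Iio
  let k : X → o.ToType := fun x => ToType.mk ⟨f x, (hf x trivial).1⟩
  have hjk : j ∘ k = f := by ext x; simp [j, k]
  have hfi : IsInducing f := isInducing_iff_nhds.2 fun x => by
    simpa using (hf x trivial).2
  have hk : IsEmbedding k := (hj.isInducing.of_comp_iff.1 (hjk ▸ hfi)).isEmbedding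
  have hc : Countable o.ToType := by
    rw [← Cardinal.mk_le_aleph0_iff, Cardinal.mk_toType, ← Order.lt_succ_iff, Cardinal.succ_aleph0,
      ← Cardinal.lt_ord, Cardinal.ord_aleph]
    exact ho
  exact ⟨o.ToType, inferInstance, ts, hc, inferInstance, wellFounded_lt, range k,
    ⟨hk.toHomeomorph⟩⟩
end

section
/- Let W be a countable well order with its order topology and let S ⊆ W carry the subspace topology. Then there exists a linear order ≺ on S such that the order topology of ≺ equals the subspace topology on S, the linear order (S, ≺) contains no subset that is order-isomorphic to the rationals ℚ, and (S, ≺) has only countably many downward-closed subsets. -/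
/-!
The order inherited from `W` is in general not the right one: a point of `S` may be a limit for the
inherited order although it is isolated in the subspace topology, because the limit taken in `W` is
missing from `S`. The order is rebuilt by well-founded induction, with the stronger claim that
every `T ⊆ W` carries a compatible order with countably many cuts and, if `T` is nonempty, with
both endpoints (`exists_goodOrder`). Endpoints make consecutive blocks meet in jumps, so that no
unwanted limits arise.

For the inductive step (`exists_goodOrder_step`) the claim is known for the subsets of `T` that
have a strict upper bound in `T`.

* If `T` has a greatest element that is isolated in `T`, that point is placed above a good order on
  the rest (`exists_goodOrder_of_isolated`).
* Otherwise some strictly increasing sequence `t` in `T` is cofinal in `T`, or in `T` without its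
  greatest element `m`, in which case it converges to `m`. The sets `T ∩ (t (n - 1), t n]` are
  nonempty and clopen in `T`, and carry good orders by induction. The even ones are arranged in
  ascending order, followed by `m` if present, followed by the odd ones in descending order
  (`exists_goodOrder_of_seq`). Both endpoints exist, every block has its neighbours adjacent to it,
  and the blocks converge to `m` from both sides; without `m` there is a gap in the middle.

That such a lexicographic order induces the right topology is `LeftSummable.leftAdapted`, applied
to the order and to its dual. Its cuts are countable by `cuts_lex_countable`: a cut either splits
one block or is a union of blocks. Finally, an order containing a copy of `ℚ` has a distinct cut for
every real number, so countably many cuts exclude `ℚ` (`not_strictMono_of_countable_cuts`).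
-/

open Set Filter Topology

/-! ### Good orders and lexicographic sums -/

/-- The downward-closed subsets of `T`, for the preorder on `T` pulled back along `F`. -/
def Cuts {X Q : Type*} [LinearOrder Q] (T : Set X) (F : X → Q) : Set (Set X) :=
  {A | A ⊆ T ∧ ∀ x ∈ A, ∀ y ∈ T, F y ≤ F x → y ∈ A}

/-- The left half of the assertion that the order on `T` pulled back along `F` induces the
subspace topology of `T`: the final rays `{y | F a < F y}` are open in `T`, and every
neighbourhood of a point `x` of `T` that is not the least one contains a left-open interval
ending at `x`. Applied to `OrderDual.toDual ∘ F` it expresses the right half. -/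
def LeftAdapted {X Q : Type*} [TopologicalSpace X] [LinearOrder Q] (T : Set X) (F : X → Q) :
    Prop :=
  ∀ x ∈ T, (∀ a ∈ T, F a < F x → ∀ᶠ y in 𝓝[T] x, F a < F y) ∧
    ∀ U ∈ 𝓝[T] x, (∀ y ∈ T, F x ≤ F y) ∨
      ∃ a ∈ T, F a < F x ∧ ∀ y ∈ T, F a < F y → F y ≤ F x → y ∈ U

/-- The order on `T` pulled back along the injection `F` into `ℚ` induces the subspace topology,
has countably many cuts, and has both endpoints unless `T` is empty. As every countable linear
order embeds in `ℚ`, using `ℚ`-valued functions loses no generality and avoids linear orders on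
varying subtypes. -/
structure GoodOrder {X : Type*} [TopologicalSpace X] (T : Set X) (F : X → ℚ) : Prop where
  inj : InjOn F T
  left : LeftAdapted T F
  right : LeftAdapted T (OrderDual.toDual ∘ F)
  cuts : (Cuts T F).Countable
  min : T.Nonempty → ∃ a ∈ T, ∀ y ∈ T, F a ≤ F y
  max : T.Nonempty → ∃ a ∈ T, ∀ y ∈ T, F y ≤ F a

lemma LeftAdapted.congr {X Q : Type*} [TopologicalSpace X] [LinearOrder Q] {T : Set X}
    {F F' : X → Q} (h : LeftAdapted T F) (e : EqOn F' F T) : LeftAdapted T F' := by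
  intro x hx
  obtain ⟨h1, h2⟩ := h x hx
  refine ⟨fun a ha hax => ?_, fun U hU => ?_⟩
  · rw [e ha] at hax ⊢
    rw [e hx] at hax
    filter_upwards [self_mem_nhdsWithin, h1 a ha hax] with y hy hya
    rwa [e hy]
  · rcases h2 U hU with h | ⟨a, ha, hax, hay⟩
    · left
      intro y hy
      rw [e hx, e hy]
      exact h y hy
    · right
      refine ⟨a, ha, ?_, fun y hy => ?_⟩
      · rwa [e ha, e hx]
      · rw [e ha, e hx, e hy]
        exact hay y hy

lemma GoodOrder.congr {X : Type*} [TopologicalSpace X] {T : Set X} {F F' : X → ℚ}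
    (h : GoodOrder T F) (e : EqOn F' F T) : GoodOrder T F' where
  inj := h.inj.congr e.symm
  left := h.left.congr e
  right := h.right.congr fun x hx => congrArg OrderDual.toDual (e hx)
  cuts := by
    refine h.cuts.mono ?_
    rintro A ⟨hAT, hA⟩
    refine ⟨hAT, fun x hx y hy hyx => hA x hx y hy ?_⟩
    rwa [e hy, e (hAT hx)]
  min hne := by
    obtain ⟨a, ha, h⟩ := h.min hne
    refine ⟨a, ha, fun y hy => ?_⟩
    rw [e ha, e hy]
    exact h y hy
  max hne := by
    obtain ⟨a, ha, h⟩ := h.max hne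
    refine ⟨a, ha, fun y hy => ?_⟩
    rw [e ha, e hy]
    exact h y hy

/-- The left half of the conditions on an index function `c` under which ordering `T` first by `c`
and then by good orders on the fibres of `c` yields the subspace topology. Around each point `x`,
either the fibre is open in `T` and its index is the least one or has an immediate predecessor
among the indices that occur, or the fibre is `{x}` and the lower fibres converge to `x`. -/
def LeftSummable {X I : Type*} [TopologicalSpace X] [LinearOrder I] (T : Set X) (c : X → I) :
    Prop :=
  ∀ x ∈ T,
    ((∀ᶠ y in 𝓝[T] x, c y = c x) ∧
      ((∀ y ∈ T, c x ≤ c y) ∨ ∃ y ∈ T, c y < c x ∧ ∀ z ∈ T, c z < c x → c z ≤ c y)) ∨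
    ((∀ y ∈ T, c y = c x → y = x) ∧ (∀ a ∈ T, c a < c x → ∀ᶠ y in 𝓝[T] x, c a < c y) ∧
      ∀ U ∈ 𝓝[T] x, ∃ a ∈ T, c a < c x ∧ ∀ y ∈ T, c a < c y → c y < c x → y ∈ U)

/-- The greatest element of the preceding fibre serves as the left endpoint of a neighbourhood of
the least element of a fibre, which is why the fibres need endpoints. -/
lemma LeftSummable.leftAdapted {X I Q Q' : Type*} [TopologicalSpace X] [LinearOrder I]
    [LinearOrder Q] [LinearOrder Q'] {T : Set X} {c : X → I} {G : X → Q} {F : X → Q'}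
    (hc : LeftSummable T c)
    (hF : ∀ x ∈ T, ∀ y ∈ T, F x < F y ↔ c x < c y ∨ c x = c y ∧ G x < G y)
    (inj : InjOn F T)
    (hG : ∀ i, LeftAdapted (T ∩ c ⁻¹' {i}) G)
    (hmax : ∀ x ∈ T, ∃ a ∈ T, c a = c x ∧ ∀ y ∈ T, c y = c x → G y ≤ G a) :
    LeftAdapted T F := by
  intro x hx
  rcases hc x hx with ⟨hfib, hpred⟩ | ⟨hfib, hcont, hU⟩
  · have hn : 𝓝[T ∩ c ⁻¹' {c x}] x = 𝓝[T] x := nhdsWithin_inter_of_mem' hfib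
    obtain ⟨h1, h2⟩ := hG (c x) x ⟨hx, rfl⟩
    rw [hn] at h1 h2
    refine ⟨fun a ha hax => ?_, fun U hU => ?_⟩
    · rcases (hF a ha x hx).1 hax with h | ⟨h, h'⟩
      · filter_upwards [hfib, self_mem_nhdsWithin] with y hy hyT
        exact (hF a ha y hyT).2 (Or.inl (by rw [hy]; exact h))
      · filter_upwards [hfib, self_mem_nhdsWithin, h1 a ⟨ha, h⟩ h'] with y hy hyT hya
        exact (hF a ha y hyT).2 (Or.inr ⟨by rw [hy]; exact h, hya⟩)
    · rcases h2 U hU with h | ⟨a, ⟨ha, hac⟩, hax, hay⟩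
      · rcases hpred with hp | ⟨y₀, hy₀, hlt, hp⟩
        · left
          intro y hy
          by_contra! hlt
          rcases (hF y hy x hx).1 hlt with h' | ⟨h', h''⟩
          · exact absurd (hp y hy) (not_le.2 h')
          · exact absurd (h y ⟨hy, h'⟩) (not_le.2 h'')
        · right
          obtain ⟨a, ha, hac, hamax⟩ := hmax y₀ hy₀
          refine ⟨a, ha, (hF a ha x hx).2 (Or.inl (hac ▸ hlt)), fun y hy hay hyx => ?_⟩
          rcases hyx.lt_or_eq with hyx | hyx
          · exfalso
            rcases (hF y hy x hx).1 hyx with h' | ⟨h', h''⟩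
            · have := hp y hy h'
              rcases (hF a ha y hy).1 hay with h3 | ⟨h3, h4⟩
              · exact absurd this (not_le.2 (hac ▸ h3))
              · exact absurd (hamax y hy (by rw [← h3, hac])) (not_le.2 h4)
            · exact absurd (h y ⟨hy, h'⟩) (not_le.2 h'')
          · rw [inj hy hx hyx]
            exact mem_of_mem_nhdsWithin hx hU
      · right
        have hac : c a = c x := hac
        refine ⟨a, ha, (hF a ha x hx).2 (Or.inr ⟨hac, hax⟩), fun y hy hya hyx => ?_⟩
        have hcy : c y = c x := by
          apply le_antisymm
          · by_contra! hlt
            exact absurd ((hF x hx y hy).2 (Or.inl hlt)) (not_lt.2 hyx)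
          · by_contra! hlt
            exact absurd ((hF y hy a ha).2 (Or.inl (hac ▸ hlt))) (not_lt.2 hya.le)
        refine hay y ⟨hy, hcy⟩ ?_ ?_
        · rcases (hF a ha y hy).1 hya with h' | ⟨_, h'⟩
          · exact absurd h' (by rw [hac, hcy]; exact lt_irrefl _)
          · exact h'
        · by_contra! hlt
          exact absurd ((hF x hx y hy).2 (Or.inr ⟨hcy.symm, hlt⟩)) (not_lt.2 hyx)
  · have key : ∀ a ∈ T, F a < F x → c a < c x := by
      intro a ha hax
      rcases (hF a ha x hx).1 hax with h | ⟨h, h'⟩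
      · exact h
      · rw [hfib a ha h] at hax
        exact absurd hax (lt_irrefl _)
    refine ⟨fun a ha hax => ?_, fun U hUx => Or.inr ?_⟩
    · filter_upwards [self_mem_nhdsWithin, hcont a ha (key a ha hax)] with y hyT hya
      exact (hF a ha y hyT).2 (Or.inl hya)
    · -- Beyond the greatest element `b` of the fibre of `a` all indices exceed that of `a`.
      obtain ⟨a, ha, hax, hay⟩ := hU U hUx
      obtain ⟨b, hb, hbc, hbmax⟩ := hmax a ha
      refine ⟨b, hb, (hF b hb x hx).2 (Or.inl (hbc ▸ hax)), fun y hy hby hyx => ?_⟩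
      rcases hyx.lt_or_eq with hyx | hyx
      · refine hay y hy ?_ (key y hy hyx)
        rcases (hF b hb y hy).1 hby with h | ⟨h, h'⟩
        · exact hbc ▸ h
        · exact absurd (hbmax y hy (by rw [← h, hbc])) (not_le.2 h')
      · rw [inj hy hx hyx]
        exact mem_of_mem_nhdsWithin hx hUx

/-- A cut of a lexicographic order either splits a single fibre, and is then determined by the
index and a cut of that fibre, or is a cut for the index function. -/
lemma cuts_lex_countable {X I Q Q' : Type*} [LinearOrder I] [Countable I]
    [LinearOrder Q] [LinearOrder Q'] {T : Set X} {c : X → I} {G : X → Q} {F : X → Q'}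
    (hF : ∀ x ∈ T, ∀ y ∈ T, F x < F y ↔ c x < c y ∨ c x = c y ∧ G x < G y)
    (hG : ∀ i, (Cuts (T ∩ c ⁻¹' {i}) G).Countable) (hc : (Cuts T c).Countable) :
    (Cuts T F).Countable := by
  have hle : ∀ x ∈ T, ∀ y ∈ T, F x ≤ F y ↔ ¬ (c y < c x ∨ c y = c x ∧ G y < G x) := by
    intro x hx y hy
    rw [← hF y hy x hx, not_lt]
  refine Countable.mono (s₂ := Cuts T c ∪ ⋃ i,
    (fun B => (T ∩ c ⁻¹' Iio i) ∪ B) '' Cuts (T ∩ c ⁻¹' {i}) G) ?_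
    (hc.union (countable_iUnion fun i => (hG i).image _))
  rintro A ⟨hAT, hA⟩
  by_cases h : ∃ x ∈ A, ∃ y ∈ T, c y = c x ∧ y ∉ A
  · right
    obtain ⟨x, hx, y, hy, hyx, hyA⟩ := h
    refine mem_iUnion.2 ⟨c x, A ∩ c ⁻¹' {c x}, ⟨?_, ?_⟩, ?_⟩
    · exact inter_subset_inter_left _ hAT
    · rintro u ⟨hu, huc⟩ v ⟨hv, hvc⟩ hvu
      refine ⟨hA u hu v hv ((hle v hv u (hAT hu)).2 ?_), hvc⟩
      have huc : c u = c x := huc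
      have hvc : c v = c x := hvc
      rw [huc, hvc]
      simpa using hvu
    · ext z
      constructor
      · rintro (⟨hz, hzc⟩ | ⟨hz, -⟩)
        · exact hA x hx z hz ((hF z hz x (hAT hx)).2 (Or.inl hzc)).le
        · exact hz
      · intro hz
        rcases lt_trichotomy (c z) (c x) with h | h | h
        · exact Or.inl ⟨hAT hz, h⟩
        · exact Or.inr ⟨hz, h⟩
        · exact absurd (hA z hz y hy ((hF y hy z (hAT hz)).2 (Or.inl (hyx ▸ h))).le) hyA
  · left
    push Not at h
    refine ⟨hAT, fun x hx y hy hyx => ?_⟩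
    rcases hyx.lt_or_eq with hyx | hyx
    · exact hA x hx y hy ((hF y hy x (hAT hx)).2 (Or.inl hyx)).le
    · exact h x hx y hy hyx

/-- The good orders on the fibres are assembled into the lexicographic order on `I ×ₗ ℚ`, which
is countable and hence embeds in `ℚ` again. -/
lemma exists_goodOrder_sum {X I : Type*} [TopologicalSpace X] [LinearOrder I] [Countable I]
    {T : Set X} {c : X → I} (hfib : ∀ i, ∃ G, GoodOrder (T ∩ c ⁻¹' {i}) G)
    (hl : LeftSummable T c) (hr : LeftSummable T (OrderDual.toDual ∘ c))
    (hc : (Cuts T c).Countable)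
    (hmin : T.Nonempty → ∃ a ∈ T, ∀ y ∈ T, c a ≤ c y)
    (hmax : T.Nonempty → ∃ a ∈ T, ∀ y ∈ T, c y ≤ c a) : ∃ F, GoodOrder T F := by
  choose g hg using hfib
  have : Countable (I ×ₗ ℚ) := inferInstanceAs (Countable (I × ℚ))
  obtain ⟨φ⟩ := Order.embedding_from_countable_to_dense (I ×ₗ ℚ) ℚ
  set G : X → ℚ := fun x => g (c x) x with hGdef
  set F : X → ℚ := fun x => φ (toLex (c x, G x)) with hFdef
  have hGeq : ∀ i, ∀ x ∈ T ∩ c ⁻¹' {i}, G x = g i x := by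
    rintro i x ⟨_, rfl⟩
    rfl
  have hF : ∀ x y, F x < F y ↔ c x < c y ∨ c x = c y ∧ G x < G y := by
    intro x y
    simp only [hFdef, OrderEmbedding.lt_iff_lt, Prod.Lex.toLex_lt_toLex]
  have hFle : ∀ x y, F x ≤ F y ↔ c x < c y ∨ c x = c y ∧ G x ≤ G y := by
    intro x y
    simp only [hFdef, OrderEmbedding.le_iff_le, Prod.Lex.toLex_le_toLex]
  have inj : InjOn F T := by
    intro x hx y hy hxy
    have h := φ.injective hxy
    have h1 : c x = c y := congrArg (fun p => (ofLex p).1) h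
    have h2 : G x = G y := congrArg (fun p => (ofLex p).2) h
    refine (hg (c y)).inj ⟨hx, h1⟩ ⟨hy, rfl⟩ ?_
    rw [← hGeq _ x ⟨hx, h1⟩, ← hGeq _ y ⟨hy, rfl⟩, h2]
  have hG : ∀ i, GoodOrder (T ∩ c ⁻¹' {i}) G := fun i => (hg i).congr (hGeq i)
  refine ⟨F, inj, ?_, ?_, ?_, ?_, ?_⟩
  · refine hl.leftAdapted (G := G) (fun x _ y _ => hF x y) inj (fun i => (hG i).left) ?_
    intro x hx
    obtain ⟨a, ⟨ha, hac⟩, h⟩ := (hG (c x)).max ⟨x, hx, rfl⟩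
    exact ⟨a, ha, hac, fun y hy hyc => h y ⟨hy, hyc⟩⟩
  · refine hr.leftAdapted (G := OrderDual.toDual ∘ G) ?_ ?_ (fun i => (hG _).right) ?_
    · intro x _ y _
      simp only [Function.comp, OrderDual.toDual_lt_toDual, hF, OrderDual.toDual_inj]
      rw [eq_comm]
    · exact fun x hx y hy hxy => inj hx hy hxy
    · intro x hx
      obtain ⟨a, ⟨ha, hac⟩, h⟩ := (hG (c x)).min ⟨x, hx, rfl⟩
      exact ⟨a, ha, congrArg OrderDual.toDual hac, fun y hy hyc => h y ⟨hy, hyc⟩⟩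
  · exact cuts_lex_countable (fun x _ y _ => hF x y) (fun i => (hG i).cuts) hc
  · intro hne
    obtain ⟨a, ha, h⟩ := hmin hne
    obtain ⟨b, ⟨hb, hbc⟩, hbm⟩ := (hG (c a)).min ⟨a, ha, rfl⟩
    have hbc : c b = c a := hbc
    refine ⟨b, hb, fun y hy => (hFle b y).2 ?_⟩
    rw [hbc]
    rcases (h y hy).lt_or_eq with h' | h'
    · exact Or.inl h'
    · exact Or.inr ⟨h', hbm y ⟨hy, h'.symm⟩⟩
  · intro hne
    obtain ⟨a, ha, h⟩ := hmax hne
    obtain ⟨b, ⟨hb, hbc⟩, hbm⟩ := (hG (c a)).max ⟨a, ha, rfl⟩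
    have hbc : c b = c a := hbc
    refine ⟨b, hb, fun y hy => (hFle y b).2 ?_⟩
    rw [hbc]
    rcases (h y hy).lt_or_eq with h' | h'
    · exact Or.inl h'
    · exact Or.inr ⟨h', hbm y ⟨hy, h'⟩⟩

lemma goodOrder_of_subsingleton {X : Type*} [TopologicalSpace X] {T : Set X}
    (hT : T.Subsingleton) : GoodOrder T (fun _ => 0) := by
  refine ⟨fun x hx y hy _ => hT hx hy, ?_, ?_, ?_, ?_, ?_⟩
  · exact fun x _ => ⟨fun a _ h => absurd h (lt_irrefl _), fun U _ => Or.inl fun y _ => le_rfl⟩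
  · exact fun x _ => ⟨fun a _ h => absurd h (lt_irrefl _), fun U _ => Or.inl fun y _ => le_rfl⟩
  · exact (hT.finite.finite_subsets.subset fun A hA => hA.1).countable
  · exact fun ⟨a, ha⟩ => ⟨a, ha, fun y _ => le_rfl⟩
  · exact fun ⟨a, ha⟩ => ⟨a, ha, fun y _ => le_rfl⟩

/-! ### Sums of pieces in type `ω + 1 + ω*` -/

/-- The index of the `n`-th piece in the index order `ω + 1 + ω*`, realised inside `ℤ ×ₗ ℤ`: the
even pieces ascend below `(1, 0)`, the odd ones descend above it. -/
def pieceIndex (n : ℕ) : ℤ ×ₗ ℤ :=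
  if n % 2 = 0 then toLex (0, (n : ℤ)) else toLex (2, -(n : ℤ))

/-- The index of the point, if any, to which the pieces converge. -/
def limitIndex : ℤ ×ₗ ℤ := toLex (1, 0)

lemma pieceIndex_lt_pieceIndex {i j : ℕ} : pieceIndex i < pieceIndex j ↔
    (i % 2 = 0 ∧ (j % 2 = 1 ∨ i < j)) ∨ (i % 2 = 1 ∧ j % 2 = 1 ∧ j < i) := by
  unfold pieceIndex
  split_ifs <;> simp [Prod.Lex.toLex_lt_toLex] <;> omega

lemma pieceIndex_lt_limitIndex {i : ℕ} : pieceIndex i < limitIndex ↔ i % 2 = 0 := by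
  unfold pieceIndex limitIndex
  split_ifs <;> simp only [Prod.Lex.toLex_lt_toLex] <;> omega

lemma limitIndex_lt_pieceIndex {i : ℕ} : limitIndex < pieceIndex i ↔ i % 2 = 1 := by
  unfold pieceIndex limitIndex
  split_ifs <;> simp only [Prod.Lex.toLex_lt_toLex] <;> omega

lemma pieceIndex_le_pieceIndex {i j : ℕ} : pieceIndex i ≤ pieceIndex j ↔
    ¬ ((j % 2 = 0 ∧ (i % 2 = 1 ∨ j < i)) ∨ (j % 2 = 1 ∧ i % 2 = 1 ∧ i < j)) := by
  rw [← pieceIndex_lt_pieceIndex, not_lt]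

lemma pieceIndex_inj {i j : ℕ} : pieceIndex i = pieceIndex j ↔ i = j := by
  refine ⟨fun h => ?_, fun h => h ▸ rfl⟩
  have h1 := pieceIndex_le_pieceIndex.1 h.le
  have h2 := pieceIndex_le_pieceIndex.1 h.ge
  omega

lemma pieceIndex_ne_limitIndex {i : ℕ} : pieceIndex i ≠ limitIndex := by
  intro h
  have h1 := mt pieceIndex_lt_limitIndex.2 (not_lt.2 h.ge)
  have h2 := mt limitIndex_lt_pieceIndex.2 (not_lt.2 h.le)
  omega

lemma countable_isLowerSet_nat : {E : Set ℕ | IsLowerSet E}.Countable := by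
  refine ((countable_singleton univ).union (countable_range Iio)).mono fun E hE => ?_
  rcases IsLowerSet.eq_univ_or_Iio hE with h | ⟨a, h⟩
  · exact Or.inl h
  · exact Or.inr ⟨a, h.symm⟩

/-- A cut is determined by the even pieces and the odd pieces it meets, which form a lower and an
upper set of naturals, and by whether it contains the limit point. -/
lemma cuts_pieceIndex_countable {X : Type*} {T : Set X} {c : X → ℤ ×ₗ ℤ}
    (hc : ∀ x ∈ T, (∃ n, c x = pieceIndex n) ∨ c x = limitIndex) : (Cuts T c).Countable := by
  have hcount : ({E : Set ℕ | IsLowerSet E} ×ˢ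
      ({E : Set ℕ | IsLowerSet E} ×ˢ (univ : Set Prop))).Countable :=
    countable_isLowerSet_nat.prod (countable_isLowerSet_nat.prod (to_countable _))
  refine (hcount.image fun p => {x | x ∈ T ∧ ((∃ n, n % 2 = 0 ∧ n ∈ p.1 ∧ c x = pieceIndex n) ∨
    (∃ n, n % 2 = 1 ∧ n ∉ p.2.1 ∧ c x = pieceIndex n) ∨ (c x = limitIndex ∧ p.2.2))}).mono ?_
  rintro A ⟨hAT, hA⟩
  refine ⟨({n | ∃ k, n ≤ k ∧ k % 2 = 0 ∧ ∃ x ∈ A, pieceIndex k ≤ c x},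
    {n | ∀ k, k ≤ n → k % 2 = 1 → ¬ ∃ x ∈ A, pieceIndex k ≤ c x},
    ∃ x ∈ A, limitIndex ≤ c x), ⟨?_, ?_, trivial⟩, ?_⟩
  · rintro a b hba ⟨k, hk, h⟩
    exact ⟨k, hba.trans hk, h⟩
  · intro a b hba h k hk
    exact h k (hk.trans hba)
  · ext x
    constructor
    · rintro ⟨hx, ⟨n, hn, ⟨k, hnk, hk, u, hu, hku⟩, hxn⟩ | ⟨n, hn, hnk, hxn⟩ | ⟨hxn, u, hu, hk⟩⟩
      · refine hA u hu x hx (le_trans ?_ hku)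
        rw [hxn, pieceIndex_le_pieceIndex]
        omega
      · simp only [mem_ofPred_eq, not_forall, not_not] at hnk
        obtain ⟨k, hkn, hk, u, hu, hku⟩ := hnk
        refine hA u hu x hx (le_trans ?_ hku)
        rw [hxn, pieceIndex_le_pieceIndex]
        omega
      · exact hA u hu x hx (hxn ▸ hk)
    · intro hx
      refine ⟨hAT hx, ?_⟩
      rcases hc x (hAT hx) with ⟨n, hn⟩ | hn
      · rcases Nat.mod_two_eq_zero_or_one n with h | h
        · exact Or.inl ⟨n, h, ⟨n, le_rfl, h, x, hx, hn.ge⟩, hn⟩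
        · exact Or.inr (Or.inl ⟨n, h, fun h' => h' n le_rfl h ⟨x, hx, hn.ge⟩, hn⟩)
      · exact Or.inr (Or.inr ⟨hn, x, hx, hn.ge⟩)

/-- The case where `T` has no greatest element, or one to which the rest of `T` converges. The
pieces are the sets `T ∩ (t (n - 1), t n]`, and a point of `T` above all
of `t` is the greatest element of `T` and the supremum of `t`. Ordering the pieces in type
`ω + ω*` keeps both endpoints, and the limit point, if present, sits in the middle. -/
lemma exists_goodOrder_of_seq {W : Type*} [LinearOrder W] [WellFoundedLT W]
    [TopologicalSpace W] [OrderTopology W] {T : Set W}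
    (IH : ∀ v ∈ T, ∀ T' ⊆ T ∩ Iio v, ∃ F, GoodOrder T' F)
    {t : ℕ → W} (ht : StrictMono t) (htT : ∀ n, t n ∈ T)
    (hlim : ∀ m ∈ T, (∀ n, t n < m) → (∀ y ∈ T, y ≤ m) ∧ ∀ w < m, ∃ n, w < t n) :
    ∃ F, GoodOrder T F := by
  classical
  set c : W → ℤ ×ₗ ℤ := fun x =>
    if h : ∃ n, x ≤ t n then pieceIndex (Nat.find h) else limitIndex with hcdef
  have hpiece : ∀ x n, c x = pieceIndex n ↔ x ≤ t n ∧ ∀ k < n, t k < x := by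
    intro x n
    by_cases h : ∃ n, x ≤ t n
    · simp only [hcdef, h, dite_true, pieceIndex_inj, Nat.find_eq_iff, not_le]
    · simp only [hcdef, h, dite_false, pieceIndex_ne_limitIndex.symm, false_iff]
      exact fun h' => h ⟨n, h'.1⟩
  have hlimit : ∀ x, c x = limitIndex ↔ ∀ n, t n < x := by
    intro x
    by_cases h : ∃ n, x ≤ t n
    · simp only [hcdef, h, dite_true, pieceIndex_ne_limitIndex, false_iff]
      simpa using h
    · simp only [hcdef, h, dite_false, true_iff]
      simpa using h
  have hcases : ∀ x, (∃ n, c x = pieceIndex n) ∨ c x = limitIndex := by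
    intro x
    by_cases h : ∃ n, x ≤ t n
    · exact Or.inl ⟨Nat.find h, by simp only [hcdef, h, dite_true]⟩
    · exact Or.inr (by simp only [hcdef, h, dite_false])
  have hct : ∀ n, c (t n) = pieceIndex n := fun n => (hpiece _ _).2 ⟨le_rfl, fun k hk => ht hk⟩
  have hlate : ∀ y n k, c y = pieceIndex n → t k < y → k < n := by
    intro y n k hy hk
    by_contra! h
    exact absurd (hk.trans_le ((hpiece y n).1 hy).1) (not_lt.2 (ht.monotone h))
  have hopen : ∀ x n, c x = pieceIndex n → ∀ᶠ y in 𝓝[T] x, c y = c x := by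
    intro x n hx
    have h := (hpiece x n).1 hx
    refine mem_nhdsWithin_of_mem_nhds ?_
    have h1 : ∀ᶠ y in 𝓝 x, y ≤ t n := (isLowerSet_Iic (t n)).isOpen.mem_nhds h.1
    have h2 : ∀ᶠ y in 𝓝 x, ∀ k ∈ Finset.range n, t k < y :=
      (Filter.eventually_all_finset _).2 fun k hk => lt_mem_nhds (h.2 k (Finset.mem_range.1 hk))
    filter_upwards [h1, h2] with y hy1 hy2
    rw [hx, hpiece]
    exact ⟨hy1, fun k hk => hy2 k (Finset.mem_range.2 hk)⟩
  have huniq : ∀ x ∈ T, ∀ y ∈ T, c x = limitIndex → c y = limitIndex → x = y := by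
    intro x hx y hy hx' hy'
    exact le_antisymm ((hlim y hy ((hlimit y).1 hy')).1 x hx)
      ((hlim x hx ((hlimit x).1 hx')).1 y hy)
  have hev : ∀ x, c x = limitIndex → ∀ n, ∀ᶠ y in 𝓝[T] x, t n < y := fun x hx n =>
    mem_nhdsWithin_of_mem_nhds (lt_mem_nhds ((hlimit x).1 hx n))
  have hnhds : ∀ x ∈ T, c x = limitIndex → ∀ U ∈ 𝓝[T] x,
      ∃ N, ∀ y ∈ T, t N < y → y ∈ U := by
    intro x hx hcx U hU
    obtain ⟨h1, h2⟩ := hlim x hx ((hlimit x).1 hcx)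
    obtain ⟨V, hV, hVU⟩ := mem_nhdsWithin_iff_exists_mem_nhds_inter.1 hU
    obtain ⟨w, hw, hwV⟩ := exists_Ioc_subset_of_mem_nhds hV ⟨t 0, (hlimit x).1 hcx 0⟩
    obtain ⟨N, hN⟩ := h2 w hw
    exact ⟨N, fun y hy hNy => hVU ⟨hwV ⟨hN.trans hNy, h1 y hy⟩, hy⟩⟩
  have : Countable (ℤ ×ₗ ℤ) := inferInstanceAs (Countable (ℤ × ℤ))
  refine exists_goodOrder_sum (c := c) ?_ ?_ ?_
    (cuts_pieceIndex_countable fun x _ => hcases x) ?_ ?_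
  · intro i
    by_cases hi : ∃ n, i = pieceIndex n
    · obtain ⟨n, rfl⟩ := hi
      refine IH (t (n + 1)) (htT _) _ fun x hx => ⟨hx.1, ?_⟩
      exact ((hpiece x n).1 hx.2).1.trans_lt (ht (Nat.lt_succ_self n))
    · refine ⟨_, goodOrder_of_subsingleton ?_⟩
      have key : ∀ x, c x = i → c x = limitIndex := fun x hx =>
        (hcases x).resolve_left fun ⟨n, hn⟩ => hi ⟨n, hx ▸ hn⟩
      exact fun x hx y hy => huniq x hx.1 y hy.1 (key x hx.2) (key y hy.2)
  · intro x hx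
    rcases hcases x with ⟨n, hn⟩ | hm
    · left
      refine ⟨hopen x n hn, ?_⟩
      -- The predecessor of an even index `n` is `n - 2`, that of an odd index `n` is `n + 2`.
      by_cases h0 : n = 0
      · left
        intro y _
        rw [hn, h0, ← not_lt]
        rcases hcases y with ⟨k, hk⟩ | hk
        · rw [hk, pieceIndex_lt_pieceIndex]
          omega
        · rw [hk, limitIndex_lt_pieceIndex]
          omega
      · right
        refine ⟨t (if n % 2 = 0 then n - 2 else n + 2), htT _, ?_, fun z _ => ?_⟩
        · rw [hct, hn, pieceIndex_lt_pieceIndex]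
          split_ifs <;> omega
        · rw [hct, hn, ← not_lt]
          rcases hcases z with ⟨k, hk⟩ | hk
          · rw [hk, pieceIndex_lt_pieceIndex, pieceIndex_lt_pieceIndex]
            split_ifs <;> omega
          · rw [hk, limitIndex_lt_pieceIndex, pieceIndex_lt_limitIndex]
            split_ifs <;> omega
    · right
      refine ⟨fun y hy hyx => huniq y hy x hx (hyx.trans hm) hm, fun a _ hax => ?_,
        fun U hU => ?_⟩
      · rcases hcases a with ⟨k, hk⟩ | hk
        · rw [hk, hm, pieceIndex_lt_limitIndex] at hax
          filter_upwards [hev x hm k] with y hy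
          rw [hk]
          rcases hcases y with ⟨j, hj⟩ | hj
          · have := hlate y j k hj hy
            rw [hj, pieceIndex_lt_pieceIndex]
            omega
          · rwa [hj, pieceIndex_lt_limitIndex]
        · exact absurd hax (by rw [hk, hm]; exact lt_irrefl _)
      · obtain ⟨N, hN⟩ := hnhds x hx hm U hU
        refine ⟨t (2 * N), htT _, ?_, fun y hy h1 h2 => hN y hy ?_⟩
        · rw [hct, hm, pieceIndex_lt_limitIndex]
          omega
        · rcases hcases y with ⟨j, hj⟩ | hj
          · rw [hct, hj, pieceIndex_lt_pieceIndex] at h1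
            rw [hj, hm, pieceIndex_lt_limitIndex] at h2
            exact ((hpiece y j).1 hj).2 N (by omega)
          · exact absurd h2 (by rw [hj, hm]; exact lt_irrefl _)
  · intro x hx
    simp only [Function.comp, OrderDual.toDual_lt_toDual, OrderDual.toDual_le_toDual,
      OrderDual.toDual_inj]
    rcases hcases x with ⟨n, hn⟩ | hm
    · left
      refine ⟨hopen x n hn, ?_⟩
      -- The successor of an even index `n` is `n + 2`, that of an odd index `n` is `n - 2`.
      by_cases h0 : n = 1
      · left
        intro y _
        rw [hn, h0, ← not_lt]
        rcases hcases y with ⟨k, hk⟩ | hk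
        · rw [hk, pieceIndex_lt_pieceIndex]
          omega
        · rw [hk, pieceIndex_lt_limitIndex]
          omega
      · right
        refine ⟨t (if n % 2 = 0 then n + 2 else n - 2), htT _, ?_, fun z _ => ?_⟩
        · rw [hct, hn, pieceIndex_lt_pieceIndex]
          split_ifs <;> omega
        · rw [hct, hn, ← not_lt]
          rcases hcases z with ⟨k, hk⟩ | hk
          · rw [hk, pieceIndex_lt_pieceIndex, pieceIndex_lt_pieceIndex]
            split_ifs <;> omega
          · rw [hk, limitIndex_lt_pieceIndex, pieceIndex_lt_limitIndex]
            split_ifs <;> omega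
    · right
      refine ⟨fun y hy hyx => huniq y hy x hx (hyx.trans hm) hm, fun a _ hax => ?_,
        fun U hU => ?_⟩
      · rcases hcases a with ⟨k, hk⟩ | hk
        · rw [hk, hm, limitIndex_lt_pieceIndex] at hax
          filter_upwards [hev x hm k] with y hy
          rw [hk]
          rcases hcases y with ⟨j, hj⟩ | hj
          · have := hlate y j k hj hy
            rw [hj, pieceIndex_lt_pieceIndex]
            omega
          · rwa [hj, limitIndex_lt_pieceIndex]
        · exact absurd hax (by rw [hk, hm]; exact lt_irrefl _)
      · obtain ⟨N, hN⟩ := hnhds x hx hm U hU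
        refine ⟨t (2 * N + 1), htT _, ?_, fun y hy h1 h2 => hN y hy ?_⟩
        · rw [hct, hm, limitIndex_lt_pieceIndex]
          omega
        · rcases hcases y with ⟨j, hj⟩ | hj
          · rw [hct, hj, pieceIndex_lt_pieceIndex] at h1
            rw [hj, hm, limitIndex_lt_pieceIndex] at h2
            exact ((hpiece y j).1 hj).2 N (by omega)
          · exact absurd h2 (by rw [hj, hm]; exact lt_irrefl _)
  · refine fun _ => ⟨t 0, htT 0, fun y _ => ?_⟩
    rw [hct, ← not_lt]
    rcases hcases y with ⟨k, hk⟩ | hk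
    · rw [hk, pieceIndex_lt_pieceIndex]
      omega
    · rw [hk, limitIndex_lt_pieceIndex]
      omega
  · refine fun _ => ⟨t 1, htT 1, fun y _ => ?_⟩
    rw [hct, ← not_lt]
    rcases hcases y with ⟨k, hk⟩ | hk
    · rw [hk, pieceIndex_lt_pieceIndex]
      omega
    · rw [hk, pieceIndex_lt_limitIndex]
      omega

/-! ### The inductive construction -/

lemma exists_seq_cofinal {W : Type*} [LinearOrder W] [Countable W] {T : Set W}
    (hne : T.Nonempty) (hmax : ∀ a ∈ T, ∃ b ∈ T, a < b) :
    ∃ t : ℕ → W, StrictMono t ∧ (∀ n, t n ∈ T) ∧ ∀ x ∈ T, ∃ n, x < t n := by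
  have : Nonempty T := hne.to_subtype
  obtain ⟨e, he⟩ := exists_surjective_nat T
  choose f hfT hf using hmax
  let next : T → T := fun a => ⟨f a a.2, hfT a a.2⟩
  have hnext : ∀ a, a < next a := fun a => hf a a.2
  let t : ℕ → T := fun n => Nat.rec (e 0) (fun k a => next (max a (e k))) n
  have hstep : ∀ n, max (t n) (e n) < t (n + 1) := fun n => hnext _
  refine ⟨fun n => (t n).1, ?_, ?_, fun x hx => ?_⟩
  · exact strictMono_nat_of_lt_succ fun n => (le_max_left _ _).trans_lt (hstep n)
  · exact fun n => (t n).2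
  · obtain ⟨n, hn⟩ := he ⟨x, hx⟩
    refine ⟨n + 1, ?_⟩
    have h : e n < t (n + 1) := (le_max_right _ _).trans_lt (hstep n)
    rw [hn] at h
    exact h

/-- The case of a greatest element `m` of `T` that is isolated in `T`: the point `m` is placed
above a good order on the rest, which has a greatest element unless it is empty. -/
lemma exists_goodOrder_of_isolated {W : Type*} [LinearOrder W]
    [TopologicalSpace W] [OrderTopology W] {T : Set W} {m : W} (hm : m ∈ T)
    (hmax : ∀ y ∈ T, y ≤ m) (hiso : m ∉ closure (T ∩ Iio m))
    (hT' : ∃ F, GoodOrder (T ∩ Iio m) F) : ∃ F, GoodOrder T F := by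
  classical
  have hlt : ∀ y ∈ T, y ≠ m → y < m := fun y hy h => lt_of_le_of_ne (hmax y hy) h
  have hev : ∀ x ∈ T, ∀ᶠ y in 𝓝[T] x, decide (y = m) = decide (x = m) := by
    intro x hx
    by_cases h : x = m
    · subst h
      have h1 : ∀ᶠ y in 𝓝[T] x, y ∉ T ∩ Iio x :=
        mem_nhdsWithin_of_mem_nhds
          (mem_of_superset (isClosed_closure.isOpen_compl.mem_nhds hiso)
            (compl_subset_compl.2 subset_closure))
      filter_upwards [h1, self_mem_nhdsWithin] with y hy hyT
      have : y = x := by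
        by_contra hne
        exact hy ⟨hyT, hlt y hyT hne⟩
      rw [this]
    · have h1 : ∀ᶠ y in 𝓝[T] x, y < m := mem_nhdsWithin_of_mem_nhds (gt_mem_nhds (hlt x hx h))
      filter_upwards [h1] with y hy
      simp [h, hy.ne]
  refine exists_goodOrder_sum (c := fun x => decide (x = m)) ?_ ?_ ?_ ?_ ?_ ?_
  · rintro (_ | _)
    · have heq : T ∩ (fun x => decide (x = m)) ⁻¹' {false} = T ∩ Iio m := by
        ext y
        simp only [mem_inter_iff, mem_preimage, mem_singleton_iff, decide_eq_false_iff_not, mem_Iio]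
        exact ⟨fun h => ⟨h.1, hlt y h.1 h.2⟩, fun h => ⟨h.1, h.2.ne⟩⟩
      rwa [heq]
    · refine ⟨_, goodOrder_of_subsingleton ?_⟩
      rintro x ⟨_, hx⟩ y ⟨_, hy⟩
      simp only [mem_preimage, mem_singleton_iff, decide_eq_true_eq] at hx hy
      rw [hx, hy]
  · refine fun x hx => Or.inl ⟨hev x hx, ?_⟩
    by_cases h : ∃ y ∈ T, decide (y = m) < decide (x = m)
    · right
      obtain ⟨y, hy, hyx⟩ := h
      refine ⟨y, hy, hyx, fun z _ hz => ?_⟩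
      rw [(Bool.lt_iff.1 hz).1]
      exact Bool.false_le _
    · left
      push Not at h
      exact h
  · refine fun x hx => Or.inl ⟨(hev x hx).mono fun y hy => congrArg OrderDual.toDual hy, ?_⟩
    simp only [Function.comp, OrderDual.toDual_lt_toDual, OrderDual.toDual_le_toDual]
    by_cases h : ∃ y ∈ T, decide (x = m) < decide (y = m)
    · right
      obtain ⟨y, hy, hyx⟩ := h
      refine ⟨y, hy, hyx, fun z _ hz => ?_⟩
      rw [(Bool.lt_iff.1 hz).2]
      exact Bool.le_true _
    · left
      push Not at h
      exact h
  · refine ((to_countable (univ : Set (Set Bool))).image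
      fun J => T ∩ (fun x => decide (x = m)) ⁻¹' J).mono ?_
    rintro A ⟨hAT, hA⟩
    refine ⟨(fun x => decide (x = m)) '' A, trivial, ?_⟩
    ext y
    constructor
    · rintro ⟨hy, x, hx, hxy⟩
      exact hA x hx y hy hxy.ge
    · exact fun hy => ⟨hAT hy, y, hy, rfl⟩
  · intro _
    by_cases h : ∃ y ∈ T, y ≠ m
    · obtain ⟨y, hy, hym⟩ := h
      refine ⟨y, hy, fun z _ => ?_⟩
      simp only [hym, decide_false]
      exact Bool.false_le _
    · push Not at h
      refine ⟨m, hm, fun z hz => ?_⟩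
      rw [h z hz]
  · refine fun _ => ⟨m, hm, fun z _ => ?_⟩
    simp only [decide_true]
    exact Bool.le_true _

lemma exists_goodOrder_step {W : Type*} [LinearOrder W] [Countable W] [WellFoundedLT W]
    [TopologicalSpace W] [OrderTopology W] {T : Set W}
    (IH : ∀ v ∈ T, ∀ T' ⊆ T ∩ Iio v, ∃ F, GoodOrder T' F) : ∃ F, GoodOrder T F := by
  rcases T.eq_empty_or_nonempty with rfl | hne
  · exact ⟨_, goodOrder_of_subsingleton subsingleton_empty⟩
  by_cases hmax : ∃ m ∈ T, ∀ y ∈ T, y ≤ m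
  · obtain ⟨m, hm, hmax⟩ := hmax
    by_cases hcl : m ∈ closure (T ∩ Iio m)
    · have hnear : ∀ w < m, ∃ y ∈ T ∩ Iio m, w < y := by
        intro w hw
        obtain ⟨y, hy, hyT⟩ := mem_closure_iff.1 hcl (Ioi w) isOpen_Ioi hw
        exact ⟨y, hyT, hy⟩
      obtain ⟨t, ht, htT, hcof⟩ := exists_seq_cofinal (closure_nonempty_iff.1 ⟨m, hcl⟩)
        fun a ha => hnear a ha.2
      refine exists_goodOrder_of_seq IH ht (fun n => (htT n).1) fun x hx hxt => ?_
      have hxm : x = m := by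
        by_contra hne
        obtain ⟨n, hn⟩ := hcof x ⟨hx, lt_of_le_of_ne (hmax x hx) hne⟩
        exact lt_asymm hn (hxt n)
      subst hxm
      refine ⟨hmax, fun w hw => ?_⟩
      obtain ⟨y, hy, hwy⟩ := hnear w hw
      obtain ⟨n, hn⟩ := hcof y hy
      exact ⟨n, hwy.trans hn⟩
    · exact exists_goodOrder_of_isolated hm hmax hcl (IH m hm _ Subset.rfl)
  · push Not at hmax
    obtain ⟨t, ht, htT, hcof⟩ := exists_seq_cofinal hne hmax
    refine exists_goodOrder_of_seq IH ht htT fun x hx hxt => ?_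
    obtain ⟨n, hn⟩ := hcof x hx
    exact absurd hn (lt_asymm (hxt n))

lemma exists_goodOrder {W : Type*} [LinearOrder W] [Countable W] [WellFoundedLT W]
    [TopologicalSpace W] [OrderTopology W] (T : Set W) : ∃ F, GoodOrder T F := by
  have key : ∀ v : W, ∀ T ⊆ Iio v, ∃ F, GoodOrder T F := by
    intro v
    induction v using WellFoundedLT.induction with
    | ind v ih =>
      intro T hT
      exact exists_goodOrder_step fun u hu T' hT' => ih u (hT hu) T' fun x hx => (hT' hx).2
  exact exists_goodOrder_step fun v _ T' hT' => key v T' fun x hx => (hT' hx).2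

/-! ### From good orders to linear orders on the subspace -/

/-- A copy of `ℚ` would yield pairwise distinct cuts indexed by the reals. -/
lemma not_strictMono_of_countable_cuts {L : Type*} [LinearOrder L]
    (h : {A : Set L | ∀ x ∈ A, ∀ y, y ≤ x → y ∈ A}.Countable) :
    ¬ ∃ f : ℚ → L, StrictMono f := by
  rintro ⟨f, hf⟩
  have hinj : Function.Injective fun r : ℝ => {s : L | ∃ q : ℚ, (q : ℝ) < r ∧ s ≤ f q} := by
    refine Function.Injective.of_lt_imp_ne fun r r' hr heq => ?_
    obtain ⟨q, hrq, hqr⟩ := exists_rat_btwn hr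
    have hq : f q ∈ {s : L | ∃ q : ℚ, (q : ℝ) < r ∧ s ≤ f q} := by
      rw [heq]
      exact ⟨q, hqr, le_rfl⟩
    obtain ⟨p, hp, hqp⟩ := hq
    have : (q : ℝ) ≤ p := by exact_mod_cast hf.le_iff_le.1 hqp
    linarith
  refine not_countable_univ (α := ℝ) ?_
  refine MapsTo.countable_of_injOn (t := {A : Set L | ∀ x ∈ A, ∀ y, y ≤ x → y ∈ A}) ?_
    hinj.injOn h
  rintro r - x ⟨q, hq, hx⟩ y hy
  exact ⟨q, hq, hy.trans hx⟩

/-- The two half-adaptedness conditions, on all of `S`, amount to equality of the neighbourhood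
filters of the subspace topology and of the order topology. -/
lemma GoodOrder.orderTopology {X : Type*} [TopologicalSpace X] {S : Set X} {F : X → ℚ}
    (h : GoodOrder S F) (lo : LinearOrder S) (hlo : ∀ x y : S, x < y ↔ F x < F y) :
    OrderTopology S := by
  have hle : ∀ x y : S, x ≤ y ↔ F x ≤ F y := fun x y => by
    rw [← not_lt, hlo, not_lt]
  refine ⟨TopologicalSpace.ext_nhds fun x => ?_⟩
  have hord := @nhds_eq_order S (Preorder.topology S) _ (@OrderTopology.mk S (_) _ rfl) x
  refine Eq.trans ?_ hord.symm
  obtain ⟨l1, l2⟩ := h.left x x.2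
  obtain ⟨r1, r2⟩ := h.right x x.2
  simp only [Function.comp, OrderDual.toDual_lt_toDual, OrderDual.toDual_le_toDual] at r1 r2
  refine le_antisymm ?_ ?_
  · refine le_inf (le_iInf₂ fun b hb => ?_) (le_iInf₂ fun b hb => ?_)
    · rw [le_principal_iff, mem_nhds_subtype_iff_nhdsWithin]
      filter_upwards [l1 b b.2 ((hlo _ _).1 hb), self_mem_nhdsWithin] with y hy hyS
      exact ⟨⟨y, hyS⟩, (hlo _ _).2 hy, rfl⟩
    · rw [le_principal_iff, mem_nhds_subtype_iff_nhdsWithin]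
      filter_upwards [r1 b b.2 ((hlo _ _).1 hb), self_mem_nhdsWithin] with y hy hyS
      exact ⟨⟨y, hyS⟩, (hlo _ _).2 hy, rfl⟩
  · intro U hU
    rw [mem_nhds_subtype_iff_nhdsWithin] at hU
    have hmem : ∀ y : S, (y : X) ∈ Subtype.val '' U → y ∈ U := fun y hy => by simpa using hy
    -- Half-open intervals at `x` on both sides are contained in `U`.
    have hL : {y : S | y ≤ x → y ∈ U} ∈ ⨅ b ∈ Iio x, 𝓟 (Ioi b) := by
      rcases l2 _ hU with hx | ⟨a, ha, hax, hay⟩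
      · refine univ_mem' fun y hy => ?_
        have : y = x := le_antisymm hy ((hle x y).2 (hx y y.2))
        rw [this]
        exact hmem x (mem_of_mem_nhdsWithin x.2 hU)
      · refine mem_of_superset
          (mem_iInf_of_mem ⟨a, ha⟩ (mem_iInf_of_mem ((hlo _ _).2 hax) (mem_principal_self _))) ?_
        exact fun y hy hyx => hmem y (hay y y.2 ((hlo _ _).1 hy) ((hle _ _).1 hyx))
    have hR : {y : S | x ≤ y → y ∈ U} ∈ ⨅ b ∈ Ioi x, 𝓟 (Iio b) := by
      rcases r2 _ hU with hx | ⟨a, ha, hax, hay⟩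
      · refine univ_mem' fun y hy => ?_
        have : y = x := le_antisymm ((hle y x).2 (hx y y.2)) hy
        rw [this]
        exact hmem x (mem_of_mem_nhdsWithin x.2 hU)
      · refine mem_of_superset
          (mem_iInf_of_mem ⟨a, ha⟩ (mem_iInf_of_mem ((hlo _ _).2 hax) (mem_principal_self _))) ?_
        exact fun y hy hyx => hmem y (hay y y.2 ((hlo _ _).1 hy) ((hle _ _).1 hyx))
    filter_upwards [mem_inf_of_left hL, mem_inf_of_right hR] with y h1 h2
    exact (le_total y x).elim h1 h2

/-- Let `W` be a countable well order with its order topology and `S ⊆ W` with the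
subspace topology.  Then there is a linear order `≺` on `S` whose order topology is the
subspace topology, which contains no copy of `ℚ`, and which has only countably many
downward-closed subsets. -/
theorem stmt_7 (W : Type) [LinearOrder W] [Countable W]
    (hW : WellFounded ((· < ·) : W → W → Prop))
    [TopologicalSpace W] [OrderTopology W] (S : Set W) :
    ∃ lo : LinearOrder S,
      @OrderTopology S instTopologicalSpaceSubtype lo.toPreorder ∧
      (¬ ∃ f : ℚ → S, @StrictMono ℚ S _ lo.toPreorder f) ∧
      Set.Countable {A : Set S | ∀ x ∈ A, ∀ y : S, lo.le y x → y ∈ A} := by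
  have : WellFoundedLT W := ⟨hW⟩
  obtain ⟨F, hF⟩ := exists_goodOrder S
  have hinj : Function.Injective fun s : S => F s := hF.inj.injective
  let lo : LinearOrder S := LinearOrder.lift' (fun s : S => F s) hinj
  have hcuts : {A : Set S | ∀ x ∈ A, ∀ y : S, lo.le y x → y ∈ A}.Countable := by
    refine MapsTo.countable_of_injOn (f := fun A : Set S => Subtype.val '' A) (t := Cuts S F) ?_
      Subtype.val_injective.image_injective.injOn hF.cuts
    intro A hA
    refine ⟨Subtype.coe_image_subset S A, ?_⟩
    rintro _ ⟨x, hx, rfl⟩ y hy hyx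
    exact ⟨⟨y, hy⟩, hA x hx ⟨y, hy⟩ hyx, rfl⟩
  exact ⟨lo, hF.orderTopology lo fun _ _ => Iff.rfl,
    not_strictMono_of_countable_cuts hcuts, hcuts⟩
end

section
/- Let (X, d) be a countable complete metric space and Y ⊆ X. Then there exists a complete metric d' on Y that induces on Y the same topology as the subspace topology inherited from (X, d); that is, every subset of a countable complete metric space is completely metrizable. -/
/-!
The inclusion of `Y` into `X` need not have closed image, but it becomes a closed embedding after
recording the inverse distance to each point outside `Y`. Since `Yᶜ` is countable, the map
`y ↦ (y, (1 / dist y z)_{z ∈ Yᶜ})` takes values in the completely metrizable space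
`X × (Yᶜ → ℝ)`. Its image is `{(x, g) | ∀ z ∈ Yᶜ, g z * dist x z = 1}`, which is closed: a point
`x ∉ Y` is excluded by the equation at `z = x`. Closed embeddings pull back complete
metrizability.
-/

/-- Every subset of a countable complete metric space is completely metrizable:
there is a complete metric on `Y` inducing the subspace topology. -/
theorem stmt_10 (X : Type*) [MetricSpace X] [Countable X] [CompleteSpace X] (Y : Set X) :
    ∃ m : MetricSpace Y,
      m.toUniformSpace.toTopologicalSpace = instTopologicalSpaceSubtype ∧
      @CompleteSpace Y m.toUniformSpace := by
  have hpos (y : Y) (z : ↥Yᶜ) : dist (y : X) z ≠ 0 :=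
    dist_ne_zero.2 fun h => z.2 (h ▸ y.2)
  let f : Y → X × (↥Yᶜ → ℝ) := fun y => (y, fun z => (dist (y : X) z)⁻¹)
  have hcont : Continuous f :=
    continuous_subtype_val.prodMk <| continuous_pi fun z =>
      (continuous_subtype_val.dist continuous_const).inv₀ fun y => hpos y z
  have hemb : Topology.IsEmbedding f :=
    .of_comp hcont continuous_fst Topology.IsEmbedding.subtypeVal
  have hrange : Set.range f = {p | ∀ z : ↥Yᶜ, p.2 z * dist p.1 (z : X) = 1} := by
    ext ⟨x, g⟩
    constructor
    · rintro ⟨y, hy⟩ z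
      rw [← hy]
      exact inv_mul_cancel₀ (hpos y z)
    · intro h
      have hx : x ∈ Y := by
        by_contra hx
        simpa using h ⟨x, hx⟩
      exact ⟨⟨x, hx⟩, Prod.ext rfl (funext fun z => (eq_inv_of_mul_eq_one_left (h z)).symm)⟩
  have hclosed : IsClosed (Set.range f) := by
    rw [hrange, Set.ofPred_forall]
    exact isClosed_iInter fun z => isClosed_eq (by fun_prop) continuous_const
  have : TopologicalSpace.IsCompletelyMetrizableSpace Y :=
    Topology.IsClosedEmbedding.IsCompletelyMetrizableSpace ⟨hemb, hclosed⟩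
  exact this.complete
end

section
/- Every countable, second-countable, regular Hausdorff, scattered topological space is completely metrizable, i.e., its topology is induced by some complete metric. -/
open Set TopologicalSpace Topology

theorem isGδ_of_scattered {Y : Type*} [TopologicalSpace Y] [MetrizableSpace Y]
    [SecondCountableTopology Y] (S : Set Y)
    (hS : ∀ A ⊆ S, A.Nonempty → ∃ x ∈ A, ∃ U : Set Y, IsOpen U ∧ U ∩ A = {x}) : IsGδ S := by
  let : MetricSpace Y := metrizableSpaceMetric Y
  let 𝒱 : Set (Set Y) := {V | IsOpen V ∧ IsGδ (V ∩ S)}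
  have hW : IsOpen (⋃₀ 𝒱) := isOpen_sUnion fun V hV => hV.1
  have hWS : IsGδ (⋃₀ 𝒱 ∩ S) := by
    obtain ⟨T, hTc, hT𝒱, hTU⟩ := isOpen_sUnion_countable 𝒱 fun V hV => hV.1
    -- This is the complement in `W` of the union of the `Fσ` sets `V \ S`.
    have key : ⋃₀ 𝒱 ∩ S = ⋃₀ 𝒱 ∩ ⋂ V ∈ T, (Vᶜ ∪ (V ∩ S)) := by
      rw [← hTU]
      ext y
      simp only [mem_inter_iff, mem_sUnion, mem_iInter, mem_union, mem_compl_iff]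
      constructor
      · rintro ⟨h, hy⟩
        exact ⟨h, fun V _ => by tauto⟩
      · rintro ⟨⟨V, hV, hyV⟩, h⟩
        exact ⟨⟨V, hV, hyV⟩, ((h V hV).resolve_left (not_not.2 hyV)).2⟩
    rw [key]
    exact hW.isGδ.inter (.biInter hTc fun V hV =>
      (hT𝒱 hV).1.isClosed_compl.isGδ.union (hT𝒱 hV).2)
  have hsub : S ⊆ ⋃₀ 𝒱 := by
    by_contra hne
    obtain ⟨x, hx, U, hU, hUx⟩ := hS (S \ ⋃₀ 𝒱) sdiff_subset (sdiff_nonempty.2 hne)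
    have hxU : x ∈ U := by
      have : x ∈ U ∩ (S \ ⋃₀ 𝒱) := hUx ▸ mem_singleton x
      exact this.1
    have hUS : U ∩ S = (U ∩ (⋃₀ 𝒱 ∩ S)) ∪ {x} := by
      rw [← hUx]
      ext y
      simp only [mem_inter_iff, mem_union, mem_sdiff]
      tauto
    have hU𝒱 : U ∈ 𝒱 :=
      ⟨hU, hUS ▸ (hU.isGδ.inter hWS).union isClosed_singleton.isGδ⟩
    exact hx.2 ⟨U, hU𝒱, hxU⟩
  rwa [inter_eq_right.2 hsub] at hWS

/-- If the range is `⋂ n, f n` with the `f n` open, the diagonal map identifies `X` with the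
closed subspace of constant sequences in the Polish space `Π n, f n`. -/
theorem isCompletelyMetrizable_of_isGδ_range {X Y : Type*} [TopologicalSpace X]
    [TopologicalSpace Y] [PolishSpace Y] {e : X → Y} (he : IsEmbedding e)
    (hG : IsGδ (range e)) : IsCompletelyMetrizableSpace X := by
  obtain ⟨f, hf, hef⟩ := hG.eq_iInter_nat
  have hmem : ∀ x n, e x ∈ f n := fun x n => by
    have : e x ∈ ⋂ n, f n := hef ▸ mem_range_self x
    exact mem_iInter.1 this n
  have : ∀ n, PolishSpace (f n) := fun n => (hf n).polishSpace
  let g : X → ∀ n, f n := fun x n => ⟨e x, hmem x n⟩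
  have hg : Continuous g :=
    continuous_pi fun n => he.continuous.subtype_mk fun x => hmem x n
  have hp : ∀ n, Continuous fun p : ∀ n, f n => (p n : Y) := fun n =>
    continuous_subtype_val.comp (continuous_apply n)
  have hrange : range g = {p | ∀ n, (p n : Y) = p 0} := by
    ext p
    constructor
    · rintro ⟨x, rfl⟩ n
      rfl
    · intro h
      have : (p 0 : Y) ∈ range e := by
        rw [hef]
        exact mem_iInter.2 fun n => h n ▸ (p n).2
      obtain ⟨x, hx⟩ := this
      exact ⟨x, funext fun n => Subtype.ext (hx.trans (h n).symm)⟩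
  have hclosed : IsClosed (range g) := by
    rw [hrange, ofPred_forall]
    exact isClosed_iInter fun n => isClosed_eq (hp n) (hp 0)
  have hemb : IsEmbedding g := IsEmbedding.of_comp hg (hp 0) he
  exact IsClosedEmbedding.IsCompletelyMetrizableSpace ⟨hemb, hclosed⟩

/-- Every countable, second-countable, regular Hausdorff, scattered topological space is
completely metrizable. -/
theorem stmt_11 (X : Type*) [t : TopologicalSpace X] [Countable X]
    [SecondCountableTopology X] [T3Space X] (hX : Scattered X) :
    ∃ m : MetricSpace X,
      m.toUniformSpace.toTopologicalSpace = t ∧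
      @CompleteSpace X m.toUniformSpace := by
  suffices IsCompletelyMetrizableSpace X from this.complete
  let : MetricSpace X := metrizableSpaceMetric X
  have : SecondCountableTopology (UniformSpace.Completion X) :=
    UniformSpace.secondCountable_of_separable _
  have he : IsEmbedding ((↑) : X → UniformSpace.Completion X) :=
    (UniformSpace.Completion.isUniformEmbedding_coe X).isEmbedding
  refine isCompletelyMetrizable_of_isGδ_range he (isGδ_of_scattered _ ?_)
  intro A hA hne
  obtain ⟨B, rfl⟩ := subset_range_iff_exists_image_eq.1 hA
  obtain ⟨x, hx, U, hU, hUx⟩ := hX B (image_nonempty.1 hne)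
  obtain ⟨V, hV, rfl⟩ := he.isOpen_iff.1 hU
  exact ⟨x, mem_image_of_mem _ hx, V, hV, by
    rw [inter_comm, ← image_inter_preimage, inter_comm, hUx, image_singleton]⟩
end

section
/- Let T be a tree of finite sequences of natural numbers (i.e., a set of finite sequences closed under taking prefixes), and let T⁺ be the set of all finite sequences τ of natural numbers such that there exists σ ∈ T with the same length as τ satisfying σ(n) ≤ τ(n) for all n < |τ|. Then T is well founded (has no infinite branch) if and only if T⁺, equipped with the order topology of the Kleene–Brouwer order, is scattered. -/
/-!
The Kleene–Brouwer order on a set `P` of sequences is a strict linear order, and it is a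
well-order as soon as `P` is a tree without an infinite branch.

If `T` is well founded, then so is `T⁺`: given a branch `f` of `T⁺`, the members of `T` lying
pointwise below `f` form a finitely branching tree with arbitrarily long members, so König's lemma
yields a branch of `T`. Hence `T⁺` is well ordered by the Kleene–Brouwer order. In a well-order the
least element of a nonempty set `S` is isolated in `S`, because the set of points not above it is
open: it is either everything, or the open ray below its immediate successor.

Conversely, for any `x` the sequences `x ++ [k]` converge to `x` from below as `k → ∞`, in the order
topology of any set containing them. If `f` is a branch of `T`, then `T⁺` contains the set of all
sequences dominating an initial segment of `f`; this set contains `x ++ [k]` for all large `k`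
along with each `x`, so it has no isolated point.
-/

/-- The (strict) Kleene–Brouwer order on finite sequences of natural numbers:
`σ <KB τ` iff `τ` is a proper prefix of `σ`, or at the least position where they differ
(`σ.take n = τ.take n` and position `n` exists in both), `σ n < τ n`. -/
def KBlt (σ τ : List ℕ) : Prop :=
  (τ <+: σ ∧ σ ≠ τ) ∨
    ∃ (n : ℕ) (hσ : n < σ.length) (hτ : n < τ.length),
      σ.take n = τ.take n ∧ σ.get ⟨n, hσ⟩ < τ.get ⟨n, hτ⟩

/-- The order topology of the Kleene–Brouwer order on a set `P` of finite sequences: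
generated by the open rays. -/
def kbTopology (P : Set (List ℕ)) : TopologicalSpace P :=
  TopologicalSpace.generateFrom
    ({s | ∃ a : P, s = {x : P | KBlt a.1 x.1}} ∪ {s | ∃ a : P, s = {x : P | KBlt x.1 a.1}})

/-- Scatteredness relative to an explicitly given topology: every nonempty subset has a
point isolated in the subspace topology. -/
def ScatteredIn (X : Type*) (t : TopologicalSpace X) : Prop :=
  ∀ S : Set X, S.Nonempty → ∃ x ∈ S, ∃ U : Set X, t.IsOpen U ∧ U ∩ S = {x}

/-- The tree `T⁺` of all finite sequences pointwise dominating some sequence of `T` of the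
same length. -/
def treePlus (T : Set (List ℕ)) : Set (List ℕ) :=
  {τ | ∃ σ ∈ T, List.Forall₂ (· ≤ ·) σ τ}

/-! ### The Kleene–Brouwer order -/

theorem not_KBlt_nil (τ : List ℕ) : ¬ KBlt [] τ := by
  rintro (⟨h, h'⟩ | ⟨n, h, -⟩)
  · exact h' (List.prefix_nil.1 h).symm
  · simp at h

theorem KBlt_cons_nil (a : ℕ) (σ : List ℕ) : KBlt (a :: σ) [] :=
  Or.inl ⟨List.nil_prefix, by simp⟩

theorem KBlt_cons_cons {a b : ℕ} {σ τ : List ℕ} :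
    KBlt (a :: σ) (b :: τ) ↔ a < b ∨ (a = b ∧ KBlt σ τ) := by
  constructor
  · rintro (⟨h, h'⟩ | ⟨n, h1, h2, h3, h4⟩)
    · rw [List.cons_prefix_cons] at h
      obtain ⟨rfl, h⟩ := h
      exact Or.inr ⟨rfl, Or.inl ⟨h, fun e => h' (by rw [e])⟩⟩
    · cases n with
      | zero => exact Or.inl (by simpa using h4)
      | succ n =>
        simp only [List.take_succ_cons, List.cons.injEq] at h3
        exact Or.inr ⟨h3.1, Or.inr ⟨n, by simpa using h1, by simpa using h2, h3.2, by simpa using h4⟩⟩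
  · rintro (h | ⟨rfl, ⟨h, h'⟩ | ⟨n, h1, h2, h3, h4⟩⟩)
    · exact Or.inr ⟨0, by simp, by simp, by simp, by simpa using h⟩
    · exact Or.inl ⟨by simpa using h, by simpa using h'⟩
    · exact Or.inr ⟨n + 1, by simpa using h1, by simpa using h2, by simpa using h3,
        by simpa using h4⟩

theorem KBlt_append_left (p : List ℕ) {σ τ : List ℕ} :
    KBlt (p ++ σ) (p ++ τ) ↔ KBlt σ τ := by
  induction p with
  | nil => rfl
  | cons a p ih => simp [KBlt_cons_cons, ih]

theorem KBlt_trans {ρ σ τ : List ℕ} (h : KBlt ρ σ) (h' : KBlt σ τ) : KBlt ρ τ := by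
  induction σ generalizing ρ τ with
  | nil => exact (not_KBlt_nil _ h').elim
  | cons b σ ih =>
    cases ρ with
    | nil => exact (not_KBlt_nil _ h).elim
    | cons a ρ =>
      cases τ with
      | nil => exact KBlt_cons_nil _ _
      | cons c τ =>
        rw [KBlt_cons_cons] at *
        rcases h with h | ⟨rfl, h⟩ <;> rcases h' with h' | ⟨rfl, h'⟩
        · exact Or.inl (h.trans h')
        · exact Or.inl h
        · exact Or.inl h'
        · exact Or.inr ⟨rfl, ih h h'⟩

theorem KBlt_trichotomy (σ τ : List ℕ) : KBlt σ τ ∨ σ = τ ∨ KBlt τ σ := by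
  induction σ generalizing τ with
  | nil =>
    cases τ with
    | nil => simp
    | cons b τ => exact Or.inr (Or.inr (KBlt_cons_nil _ _))
  | cons a σ ih =>
    cases τ with
    | nil => exact Or.inl (KBlt_cons_nil _ _)
    | cons b τ =>
      simp only [KBlt_cons_cons, List.cons.injEq]
      rcases lt_trichotomy a b with h | rfl | h
      · exact Or.inl (Or.inl h)
      · rcases ih τ with h | h | h <;> simp [h]
      · exact Or.inr (Or.inr (Or.inl h))

theorem KBlt_append_singleton {x b : List ℕ} (h : KBlt x b) (k : ℕ) : KBlt (x ++ [k]) b := by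
  refine KBlt_trans ?_ h
  nth_rewrite 2 [← List.append_nil x]
  exact (KBlt_append_left x).2 (KBlt_cons_nil _ _)

/-- The sequences `x ++ [k]` are cofinal below `x`. -/
theorem eventually_KBlt_append_singleton {a x : List ℕ} (h : KBlt a x) :
    ∀ᶠ k in Filter.atTop, KBlt a (x ++ [k]) := by
  induction x generalizing a with
  | nil =>
    cases a with
    | nil => exact (not_KBlt_nil _ h).elim
    | cons c a =>
      filter_upwards [Filter.eventually_gt_atTop c] with k hk
      exact KBlt_cons_cons.2 (Or.inl hk)
  | cons b x ih =>
    cases a with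
    | nil => exact (not_KBlt_nil _ h).elim
    | cons c a =>
      rcases KBlt_cons_cons.1 h with hca | ⟨rfl, hax⟩
      · exact Filter.Eventually.of_forall fun k => KBlt_cons_cons.2 (Or.inl hca)
      · filter_upwards [ih hax] with k hk
        exact KBlt_cons_cons.2 (Or.inr ⟨rfl, hk⟩)

/-! ### Infinite branches -/

theorem ofFn_succ_eq_append (f : ℕ → ℕ) (n : ℕ) :
    (List.ofFn fun i : Fin (n + 1) => f i) = (List.ofFn fun i : Fin n => f i) ++ [f n] := by
  rw [List.ofFn_succ']
  simp

/-- A property of sequences that holds at the root and passes to some one-step extension holds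
along an infinite branch. -/
theorem exists_branch {Q : List ℕ → Prop} (h0 : Q []) (hs : ∀ σ, Q σ → ∃ k, Q (σ ++ [k])) :
    ∃ f : ℕ → ℕ, ∀ n : ℕ, Q (List.ofFn fun i : Fin n => f i) := by
  choose! g hg using hs
  let c : ℕ → List ℕ := fun n => Nat.rec [] (fun _ σ => σ ++ [g σ]) n
  have hc : ∀ n, Q (c n) := fun n => by
    induction n with
    | zero => exact h0
    | succ n ih => exact hg _ ih
  refine ⟨fun n => g (c n), fun n => ?_⟩
  suffices h : (List.ofFn fun i : Fin n => g (c i)) = c n by rw [h]; exact hc n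
  induction n with
  | zero => rfl
  | succ n ih => rw [ofFn_succ_eq_append (fun n => g (c n)), ih]

/-- König's lemma for the tree of members of `T` lying pointwise below `f`. -/
theorem exists_branch_of_treePlus {T : Set (List ℕ)} (hT : ∀ σ ∈ T, ∀ τ, τ <+: σ → τ ∈ T)
    {f : ℕ → ℕ} (hf : ∀ n : ℕ, (List.ofFn fun i : Fin n => f i) ∈ treePlus T) :
    ∃ g : ℕ → ℕ, ∀ n : ℕ, (List.ofFn fun i : Fin n => g i) ∈ T := by
  let Q : List ℕ → Prop := fun σ =>
    ∀ n, ∃ τ ∈ T, σ <+: τ ∧ n ≤ τ.length ∧ ∀ i (h : i < τ.length), τ[i] ≤ f i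
  have h0 : Q [] := by
    intro n
    obtain ⟨τ, hτ, h⟩ := hf n
    rw [List.forall₂_iff_get] at h
    refine ⟨τ, hτ, List.nil_prefix, by simp [h.1], fun i hi => ?_⟩
    have := h.2 i hi (h.1 ▸ hi)
    simpa using this
  have hs : ∀ σ, Q σ → ∃ k, Q (σ ++ [k]) := by
    intro σ hσ
    by_contra! hcon
    simp only [Q, not_forall] at hcon
    choose N hN using hcon
    -- only the finitely many values `k ≤ f σ.length` can follow `σ` below `f`
    obtain ⟨τ, hτ, ⟨t, rfl⟩, hlen, hle⟩ :=
      hσ (σ.length + 1 + (Finset.range (f σ.length + 1)).sup N)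
    cases t with
    | nil => simp at hlen; omega
    | cons k t =>
      have hk : k ≤ f σ.length := by simpa using hle σ.length (by simp)
      have hNk : N k ≤ (Finset.range (f σ.length + 1)).sup N :=
        Finset.le_sup (f := N) (by simpa [Nat.lt_succ_iff] using hk)
      exact hN k ⟨_, hτ, ⟨t, by simp⟩, by omega, hle⟩
  obtain ⟨g, hg⟩ := exists_branch h0 hs
  refine ⟨g, fun n => ?_⟩
  obtain ⟨τ, hτ, hp, -⟩ := hg n 0
  exact hT τ hτ _ hp

theorem treePlus_prefix {T : Set (List ℕ)} (hT : ∀ σ ∈ T, ∀ τ, τ <+: σ → τ ∈ T) :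
    ∀ σ ∈ treePlus T, ∀ τ, τ <+: σ → τ ∈ treePlus T := by
  rintro σ ⟨ρ, hρ, h⟩ τ hτ
  refine ⟨ρ.take τ.length, hT ρ hρ _ (List.take_prefix _ _), ?_⟩
  rw [List.prefix_iff_eq_take] at hτ
  nth_rewrite 2 [hτ]
  exact List.forall₂_take _ h

/-- A tree without infinite branches is well ordered by the Kleene–Brouwer order. If `S` had no
least element, then neither would the set of those members of `S` that extend `[k]`, where `k` is
least such that there are any; iterating gives an infinite branch. -/
theorem exists_KB_min {P : Set (List ℕ)} (hP : ∀ σ ∈ P, ∀ τ, τ <+: σ → τ ∈ P)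
    (hb : ¬ ∃ f : ℕ → ℕ, ∀ n : ℕ, (List.ofFn fun i : Fin n => f i) ∈ P)
    {S : Set (List ℕ)} (hSP : S ⊆ P) (hS : S.Nonempty) : ∃ m ∈ S, ∀ y ∈ S, ¬ KBlt y m := by
  by_contra! hcon
  let Q : List ℕ → Prop := fun σ =>
    (∃ τ ∈ S, σ <+: τ) ∧ ∀ m ∈ S, σ <+: m → ∃ y ∈ S, σ <+: y ∧ KBlt y m
  have h0 : Q [] := by
    obtain ⟨τ, hτ⟩ := hS
    refine ⟨⟨τ, hτ, List.nil_prefix⟩, fun m hm _ => ?_⟩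
    obtain ⟨y, hy, h⟩ := hcon m hm
    exact ⟨y, hy, List.nil_prefix, h⟩
  have hs : ∀ σ, Q σ → ∃ k, Q (σ ++ [k]) := by
    rintro σ ⟨⟨τ, hτ, hp⟩, hmin⟩
    have key : ∀ m ∈ S, σ <+: m → ∃ k s, σ ++ k :: s ∈ S ∧ KBlt (σ ++ k :: s) m := by
      intro m hm hσm
      obtain ⟨y, hy, ⟨s, rfl⟩, hlt⟩ := hmin m hm hσm
      cases s with
      | nil =>
        obtain ⟨t, rfl⟩ := hσm
        exact (not_KBlt_nil _ ((KBlt_append_left σ).1 hlt)).elim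
      | cons k s => exact ⟨k, s, hy, hlt⟩
    have hex : ∃ k s, σ ++ k :: s ∈ S := by
      obtain ⟨k, s, h, -⟩ := key τ hτ hp
      exact ⟨k, s, h⟩
    classical
    refine ⟨Nat.find hex, ?_, ?_⟩
    · obtain ⟨s, h⟩ := Nat.find_spec hex
      exact ⟨_, h, ⟨s, by simp⟩⟩
    · rintro m hm ⟨t, rfl⟩
      obtain ⟨j, s, hj, hlt⟩ := key _ hm ⟨Nat.find hex :: t, by simp⟩
      have hlt' := hlt
      rw [List.append_assoc, KBlt_append_left, List.singleton_append, KBlt_cons_cons] at hlt'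
      rcases hlt' with h | ⟨h, -⟩
      · exact (Nat.find_min hex h ⟨s, hj⟩).elim
      · exact ⟨_, hj, ⟨s, by simp [h]⟩, hlt⟩
  obtain ⟨g, hg⟩ := exists_branch h0 hs
  refine hb ⟨g, fun n => ?_⟩
  obtain ⟨⟨τ, hτ, hp⟩, -⟩ := hg n
  exact hP τ (hSP hτ) _ hp

/-! ### Scatteredness -/

/-- A set well ordered by the Kleene–Brouwer order is scattered: the least element of a nonempty
subset is isolated in it. -/
theorem scatteredIn_of_exists_min {P : Set (List ℕ)}
    (hP : ∀ S : Set P, S.Nonempty → ∃ m ∈ S, ∀ y ∈ S, ¬ KBlt y.1 m.1) :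
    ScatteredIn P (kbTopology P) := by
  intro S hS
  obtain ⟨x, hx, hmin⟩ := hP S hS
  refine ⟨x, hx, {y | ¬ KBlt x.1 y.1}, ?_, ?_⟩
  · by_cases hmax : {y : P | KBlt x.1 y.1}.Nonempty
    · -- the immediate successor of `x`
      obtain ⟨s, hs, hs'⟩ := hP _ hmax
      have : {y : P | ¬ KBlt x.1 y.1} = {y : P | KBlt y.1 s.1} := by
        ext y
        refine ⟨fun h => ?_, fun h h' => hs' y h' h⟩
        rcases KBlt_trichotomy x.1 y.1 with h' | h' | h'
        · exact (h h').elim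
        · have hxs : KBlt x.1 s.1 := hs
          rw [h'] at hxs
          exact hxs
        · exact KBlt_trans h' hs
      rw [this]
      exact TopologicalSpace.GenerateOpen.basic _ (Or.inr ⟨s, rfl⟩)
    · have : {y : P | ¬ KBlt x.1 y.1} = Set.univ := by
        ext y
        simp only [Set.mem_ofPred_eq, Set.mem_univ, iff_true]
        exact fun h => hmax ⟨y, h⟩
      rw [this]
      exact TopologicalSpace.GenerateOpen.univ
  · ext y
    simp only [Set.mem_inter_iff, Set.mem_ofPred_eq, Set.mem_singleton_iff]
    constructor
    · rintro ⟨h, hy⟩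
      rcases KBlt_trichotomy x.1 y.1 with h' | h' | h'
      · exact (h h').elim
      · exact Subtype.ext h'.symm
      · exact (hmin y hy h').elim
    · rintro rfl
      exact ⟨hmin y hx, hx⟩

/-- The sequences `x ++ [k]` converge to `x` as `k → ∞`. Since they need not all lie in `P`, the
convergence is expressed for those that do. -/
theorem eventually_mem_of_isOpen {P : Set (List ℕ)} {U : Set P} (hU : (kbTopology P).IsOpen U)
    {x : P} (hx : x ∈ U) :
    ∀ᶠ k in Filter.atTop, ∀ h : x.1 ++ [k] ∈ P, (⟨x.1 ++ [k], h⟩ : P) ∈ U := by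
  change TopologicalSpace.GenerateOpen _ U at hU
  induction hU with
  | basic s hs =>
    rcases hs with ⟨a, rfl⟩ | ⟨a, rfl⟩
    · filter_upwards [eventually_KBlt_append_singleton hx] with k hk _ using hk
    · exact Filter.Eventually.of_forall fun k _ => KBlt_append_singleton hx k
  | univ => simp
  | inter s t _ _ ihs iht =>
    filter_upwards [ihs hx.1, iht hx.2] with k h1 h2 h using ⟨h1 h, h2 h⟩
  | sUnion C _ ih =>
    obtain ⟨s, hs, hxs⟩ := hx
    filter_upwards [ih s hs hxs] with k hk h using ⟨s, hs, hk h⟩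

/-- A tree `T` of finite sequences of naturals is well founded if and only if `T⁺`,
equipped with the order topology of the Kleene–Brouwer order, is scattered. -/
theorem stmt_12 (T : Set (List ℕ)) (hT : ∀ σ ∈ T, ∀ τ, τ <+: σ → τ ∈ T) :
    (¬ ∃ f : ℕ → ℕ, ∀ n : ℕ, (List.ofFn fun i : Fin n => f i) ∈ T) ↔
      ScatteredIn (treePlus T) (kbTopology (treePlus T)) := by
  constructor
  · intro hwf
    refine scatteredIn_of_exists_min fun S hS => ?_
    obtain ⟨m, ⟨m, hm, rfl⟩, hmin⟩ := exists_KB_min (treePlus_prefix hT)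
      (fun ⟨f, hf⟩ => hwf (exists_branch_of_treePlus hT hf))
      (S := Subtype.val '' S) (by rintro _ ⟨y, -, rfl⟩; exact y.2) (hS.image _)
    exact ⟨m, hm, fun y hy => hmin _ ⟨y, hy, rfl⟩⟩
  · rintro hsc ⟨f, hf⟩
    obtain ⟨x, ⟨n, hx⟩, U, hU, hUS⟩ :=
      hsc {τ | ∃ n : ℕ, List.Forall₂ (· ≤ ·) (List.ofFn fun i : Fin n => f i) τ.1}
        ⟨⟨[], [], by simpa using hf 0, List.Forall₂.nil⟩, 0, by simp⟩
    have hxU : x ∈ U := (hUS.symm ▸ Set.mem_singleton x : x ∈ U ∩ _).1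
    obtain ⟨k, hk, hfk⟩ :=
      ((eventually_mem_of_isOpen hU hxU).and (Filter.eventually_ge_atTop (f n))).exists
    have hdom : List.Forall₂ (· ≤ ·) (List.ofFn fun i : Fin (n + 1) => f i) (x.1 ++ [k]) := by
      rw [ofFn_succ_eq_append]
      exact List.rel_append hx (List.Forall₂.cons hfk List.Forall₂.nil)
    have hmem : x.1 ++ [k] ∈ treePlus T := ⟨_, hf (n + 1), hdom⟩
    have heq : (⟨x.1 ++ [k], hmem⟩ : treePlus T) ∈ ({x} : Set (treePlus T)) :=
      hUS ▸ ⟨hk hmem, n + 1, hdom⟩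
    have := congrArg Subtype.val (Set.mem_singleton_iff.1 heq)
    simp at this
end

section
/- Let L be a linear order with a least element. For each l ∈ L let V_l be the smallest subset of L that contains l, is downward closed, and is closed under successors (i.e., if x ∈ V_l and x has a successor in L, then that successor is in V_l). Equip L with the topology generated by the sets V_l for l ∈ L together with the open final segments {x ∈ L : x > a} for a ∈ L. Then L is a connected topological space if and only if L is well-ordered. -/
/-!
If `L` is not well-ordered, take a nonempty `S ⊆ L` without a least element. Its set of lower
bounds is a down-set closed under successors (a lower bound `x` of `S` lies strictly below each
element of `S`, so its successor is again a lower bound), so it is a union of sets `Vset l`; its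
complement is the union of the rays `Ioi s` for `s ∈ S`. It contains `⊥` but not all of `S`, so it
is a nontrivial clopen set.

If `L` is well-ordered, every open set `U` is closed under successors (`succ_mem_of_isOpen`), and
around each point `x ≠ ⊥` it contains some interval `(a, x]` (`exists_Ioc_subset_of_isOpen`). For a
clopen `U ∋ ⊥`, let `x` be the least point outside `U`. Some `(a, x]` misses `U`, so `(a, x)` is
empty by minimality of `x`, that is, `x` is the successor of `a ∈ U`; hence `x ∈ U`, a
contradiction.
-/


/-- `y` is the successor of `x` in a linear order: the least element strictly above `x`. -/
def IsSuccOf {L : Type*} [LinearOrder L] (x y : L) : Prop :=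
  x < y ∧ ∀ z, x < z → y ≤ z

/-- `Vset l` is the smallest subset of `L` containing `l` that is downward closed and
closed under successors (when they exist). -/
def Vset {L : Type*} [LinearOrder L] (l : L) : Set L :=
  ⋂₀ {A : Set L | l ∈ A ∧ (∀ x ∈ A, ∀ y, y ≤ x → y ∈ A) ∧
      (∀ x ∈ A, ∀ y, IsSuccOf x y → y ∈ A)}

/-- The topology on `L` generated by the sets `Vset l` together with the open final
segments `Ioi a`. -/
def cTop (L : Type*) [LinearOrder L] : TopologicalSpace L :=
  TopologicalSpace.generateFrom
    (Set.range (Vset : L → Set L) ∪ Set.range (Set.Ioi : L → Set L))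

section

open scoped Topology

variable {L : Type*} [LinearOrder L]

theorem self_mem_Vset (l : L) : l ∈ Vset l := fun _ hA => hA.1

theorem Vset_lower {l x y : L} (hx : x ∈ Vset l) (h : y ≤ x) : y ∈ Vset l :=
  fun A hA => hA.2.1 x (hx A hA) y h

theorem Vset_succ {l x y : L} (hx : x ∈ Vset l) (h : IsSuccOf x y) : y ∈ Vset l :=
  fun A hA => hA.2.2 x (hx A hA) y h

theorem succ_mem_of_isOpen {U : Set L} (hU : IsOpen[cTop L] U) {x y : L} (hx : x ∈ U)
    (h : IsSuccOf x y) : y ∈ U := by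
  induction hU with
  | basic s hs =>
    rcases hs with ⟨l, rfl⟩ | ⟨a, rfl⟩
    · exact Vset_succ hx h
    · exact lt_trans hx h.1
  | univ => trivial
  | inter s t _ _ ihs iht => exact ⟨ihs hx.1, iht hx.2⟩
  | sUnion S _ ih =>
    obtain ⟨s, hs, hxs⟩ := hx
    exact ⟨s, hs, ih s hs hxs⟩

theorem exists_Ioc_subset_of_isOpen [OrderBot L] {U : Set L} (hU : IsOpen[cTop L] U) {x : L}
    (hx : x ∈ U) (h : ⊥ < x) : ∃ a < x, Set.Ioc a x ⊆ U := by
  induction hU with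
  | basic s hs =>
    rcases hs with ⟨l, rfl⟩ | ⟨a, rfl⟩
    · exact ⟨⊥, h, fun y hy => Vset_lower hx hy.2⟩
    · exact ⟨a, hx, fun y hy => hy.1⟩
  | univ => exact ⟨⊥, h, Set.subset_univ _⟩
  | inter s t _ _ ihs iht =>
    obtain ⟨a, ha, has⟩ := ihs hx.1
    obtain ⟨b, hb, hbt⟩ := iht hx.2
    exact ⟨max a b, max_lt ha hb, fun y hy =>
      ⟨has ⟨(le_max_left a b).trans_lt hy.1, hy.2⟩,
        hbt ⟨(le_max_right a b).trans_lt hy.1, hy.2⟩⟩⟩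
  | sUnion S _ ih =>
    obtain ⟨s, hs, hxs⟩ := hx
    obtain ⟨a, ha, has⟩ := ih s hs hxs
    exact ⟨a, ha, has.trans (Set.subset_sUnion_of_mem hs)⟩

theorem eq_univ_of_isClopen [OrderBot L] (wf : WellFounded ((· < ·) : L → L → Prop)) {U : Set L}
    (hU : IsOpen[cTop L] U) (hUc : IsOpen[cTop L] Uᶜ) (hbot : ⊥ ∈ U) : U = Set.univ := by
  by_contra hne
  have hn : (Uᶜ).Nonempty := Set.nonempty_compl.2 hne
  obtain ⟨x, hx, hmin⟩ := wf.has_min Uᶜ hn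
  have hpos : ⊥ < x := bot_lt_iff_ne_bot.2 fun h => hx (h ▸ hbot)
  obtain ⟨a, ha, hsub⟩ := exists_Ioc_subset_of_isOpen hUc hx hpos
  have haU : a ∈ U := by
    by_contra h
    exact hmin a h ha
  refine hx (succ_mem_of_isOpen hU haU ⟨ha, fun z hz => ?_⟩)
  by_contra! hzx
  exact hmin z (hsub ⟨hz, hzx.le⟩) hzx

theorem isOpen_lowerBounds {S : Set L} (hS : ∀ s ∈ S, ∃ t ∈ S, t < s) :
    IsOpen[cTop L] (lowerBounds S) := by
  letI := cTop L
  have h : lowerBounds S = ⋃ l ∈ lowerBounds S, Vset l := by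
    refine Set.Subset.antisymm
      (fun x hx => Set.mem_biUnion hx (self_mem_Vset x)) (Set.iUnion₂_subset fun l hl x hx => ?_)
    refine hx _ ⟨hl, fun x hx y hy s hs => hy.trans (hx hs), fun x hx y hy s hs => ?_⟩
    obtain ⟨t, ht, hts⟩ := hS s hs
    exact hy.2 s ((hx ht).trans_lt hts)
  rw [h]
  exact isOpen_biUnion fun l _ =>
    TopologicalSpace.isOpen_generateFrom_of_mem (Or.inl (Set.mem_range_self l))

theorem isOpen_compl_lowerBounds (S : Set L) : IsOpen[cTop L] (lowerBounds S)ᶜ := by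
  letI := cTop L
  have h : (lowerBounds S)ᶜ = ⋃ s ∈ S, Set.Ioi s := by
    ext x
    simp [lowerBounds]
  rw [h]
  exact isOpen_biUnion fun s _ =>
    TopologicalSpace.isOpen_generateFrom_of_mem (Or.inr (Set.mem_range_self s))

end

/-- For a linear order `L` with a least element, the topology `cTop L` is connected if and
only if `L` is well-ordered. -/
theorem stmt_13 (L : Type*) [LinearOrder L] [OrderBot L] :
    @ConnectedSpace L (cTop L) ↔ WellFounded ((· < ·) : L → L → Prop) := by
  letI := cTop L
  constructor
  · intro hc
    refine WellFounded.wellFounded_iff_has_min.2 fun S ⟨s, hs⟩ => ?_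
    by_contra! hS
    have hcl : IsClopen (lowerBounds S) :=
      ⟨⟨isOpen_compl_lowerBounds S⟩, isOpen_lowerBounds hS⟩
    have huniv : lowerBounds S = Set.univ := hcl.eq_univ ⟨⊥, fun _ _ => bot_le⟩
    have hlb : s ∈ lowerBounds S := huniv ▸ Set.mem_univ s
    obtain ⟨t, ht, hts⟩ := hS s hs
    exact (hlb ht).not_gt hts
  · intro wf
    haveI : PreconnectedSpace L := by
      refine preconnectedSpace_iff_clopen.2 fun U hU => ?_
      by_cases hbot : ⊥ ∈ U
      · exact Or.inr (eq_univ_of_isClopen wf hU.isOpen hU.compl.isOpen hbot)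
      · refine Or.inl (Set.compl_univ_iff.1 ?_)
        exact eq_univ_of_isClopen wf hU.compl.isOpen (by simpa using hU.isOpen) hbot
    exact { toNonempty := ⟨⊥⟩ }
end

section
/- For any two well orders, each equipped with its order topology, one of them admits a topological embedding into the other. -/
/-- The range of an initial segment is a lower set, hence order-connected, and a strictly monotone
map with order-connected range is an embedding for the order topologies. -/
theorem isEmbedding_of_initialSeg {α β : Type*} [LinearOrder α] [LinearOrder β]
    [TopologicalSpace α] [OrderTopology α] [TopologicalSpace β] [OrderTopology β]
    (f : InitialSeg ((· < ·) : α → α → Prop) ((· < ·) : β → β → Prop)) : Topology.IsEmbedding f := by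
  have hmono : StrictMono f := fun _ _ h => f.map_rel_iff.2 h
  have hconn : (Set.range f).OrdConnected :=
    (InitialSeg.isLowerSet_range f).ordConnected
  exact hmono.isEmbedding_of_ordConnected hconn

/-- For any two well orders, each equipped with its order topology, one of them admits a
topological embedding into the other. -/
theorem stmt_17 (W₁ W₂ : Type*) [LinearOrder W₁] [LinearOrder W₂]
    (h₁ : WellFounded ((· < ·) : W₁ → W₁ → Prop))
    (h₂ : WellFounded ((· < ·) : W₂ → W₂ → Prop))
    [TopologicalSpace W₁] [OrderTopology W₁]
    [TopologicalSpace W₂] [OrderTopology W₂] :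
    (∃ f : W₁ → W₂, Topology.IsEmbedding f) ∨ (∃ g : W₂ → W₁, Topology.IsEmbedding g) := by
  have : WellFoundedLT W₁ := ⟨h₁⟩
  have : WellFoundedLT W₂ := ⟨h₂⟩
  -- Comparability of well orders: one of the two is an initial segment of the other.
  rcases InitialSeg.total ((· < ·) : W₁ → W₁ → Prop) ((· < ·) : W₂ → W₂ → Prop) with f | g
  · exact Or.inl ⟨f, isEmbedding_of_initialSeg f⟩
  · exact Or.inr ⟨g, isEmbedding_of_initialSeg g⟩
end
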